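/- arXiv:2412.07054 — 2 statements merged into one kernel-verified Lean document; each statement's English description precedes it below -/
import Mathlib

section
/- Let r and s be rational numbers with 0 < r < 1, 1/2 < s and r < s. Then F(r,s) = 2^{4−8r} · (Γ(r)·Γ(s−r)²)/(Γ(1−r)·Γ(s−1/2)²) · F(1−r, 1/2−r+s). (This is Kummer's transformation rewritten in the normalization F; note that r and 1−r have the same denominator, so N(r) = N(1−r).) -/
/-- The Pochhammer symbol (x)_k = x(x+1)⋯(x+k−1). -/
noncomputable def poch (x : ℝ) (k : ℕ) : ℝ := ∏ i ∈ Finset.range k, (x + i)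

/-- The hypergeometric series ₃F₂(a1,a2,a3;b1,b2;1). -/
noncomputable def threeF2 (a1 a2 a3 b1 b2 : ℝ) : ℝ :=
  ∑' k : ℕ, poch a1 k * poch a2 k * poch a3 k /
    (poch b1 k * poch b2 k * (Nat.factorial k : ℝ))

/-- The Beta function B(a,b) = Γ(a)Γ(b)/Γ(a+b). -/
noncomputable def betaFn (a b : ℝ) : ℝ :=
  Real.Gamma a * Real.Gamma b / Real.Gamma (a + b)

/-- The normalized hypergeometric value
F(r,s) = (2^{1−4r}·B(r,s−r)/N(r)) · ₃F₂(1/2,1/2,r;1,s;1), where N(r) = 2·den(r). -/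
noncomputable def Fval (r s : ℚ) : ℝ :=
  (2:ℝ) ^ ((1:ℝ) - 4 * (r:ℝ)) * betaFn (r:ℝ) ((s:ℝ) - (r:ℝ)) / (2 * (r.den : ℝ)) *
    threeF2 (1/2) (1/2) (r:ℝ) 1 (s:ℝ)

open MeasureTheory Filter Topology
open Finset.HasAntidiagonal (antidiagonal mem_antidiagonal)

lemma poch_zero (x : ℝ) : poch x 0 = 1 := by simp [poch]

lemma poch_succ (x : ℝ) (k : ℕ) : poch x (k + 1) = poch x k * (x + k) := by
  simp [poch, Finset.prod_range_succ]

lemma poch_pos {x : ℝ} (hx : 0 < x) (k : ℕ) : 0 < poch x k :=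
  Finset.prod_pos fun _ _ => by positivity

lemma Gamma_add_natCast {x : ℝ} (hx : 0 < x) (k : ℕ) :
    Real.Gamma (x + k) = poch x k * Real.Gamma x := by
  induction k with
  | zero => simp [poch_zero]
  | succ k ih =>
    have hk : x + k ≠ 0 := by positivity
    rw [Nat.cast_succ, ← add_assoc, Real.Gamma_add_one hk, ih, poch_succ]
    ring

lemma choose_eq_poch_div_factorial (u : ℝ) (n : ℕ) :
    Ring.choose (u + n - 1) n = poch u n / n.factorial := by
  rw [← Ring.multichoose_eq, eq_div_iff (by positivity), mul_comm, ← nsmul_eq_mul,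
    Ring.factorial_nsmul_multichoose_eq_ascPochhammer, Polynomial.ascPochhammer_smeval_eq_eval]
  induction n with
  | zero => simp [poch_zero]
  | succ n ih => rw [ascPochhammer_succ_eval, ih, poch_succ]

/-- The coefficient of `x ^ k` in the Gauss hypergeometric series `₂F₁(a, b; c; x)`. -/
noncomputable def gaussCoeff (a b c : ℝ) (k : ℕ) : ℝ :=
  poch a k * poch b k / (poch c k * k.factorial)

lemma gaussCoeff_pos {a b c : ℝ} (ha : 0 < a) (hb : 0 < b) (hc : 0 < c) (k : ℕ) :
    0 < gaussCoeff a b c k := by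
  have := poch_pos ha k
  have := poch_pos hb k
  have := poch_pos hc k
  unfold gaussCoeff
  positivity

lemma gaussCoeff_succ {c : ℝ} (a b : ℝ) (hc : 0 < c) (k : ℕ) :
    (k + 1) * (c + k) * gaussCoeff a b c (k + 1) = (a + k) * (b + k) * gaussCoeff a b c k := by
  have := (poch_pos hc k).ne'
  have : c + k ≠ 0 := by positivity
  simp only [gaussCoeff, poch_succ, Nat.factorial_succ]
  push_cast
  field_simp

lemma summable_gaussCoeff_mul_pow {a b c x : ℝ} (ha : 0 < a) (hb : 0 < b) (hc : 0 < c)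
    (hx0 : 0 < x) (hx1 : x < 1) : Summable fun k => gaussCoeff a b c k * x ^ k := by
  have hpos k : 0 < gaussCoeff a b c k * x ^ k :=
    mul_pos (gaussCoeff_pos ha hb hc k) (by positivity)
  refine summable_of_ratio_test_tendsto_lt_one hx1 (.of_forall fun k => (hpos k).ne') ?_
  have hratio (k : ℕ) : ‖gaussCoeff a b c (k + 1) * x ^ (k + 1)‖ / ‖gaussCoeff a b c k * x ^ k‖ =
      (a + 1 * k) / (c + 1 * k) * ((b + 1 * k) / (1 + 1 * k)) * x := by
    have hk := gaussCoeff_pos ha hb hc k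
    have : c + k ≠ 0 := by positivity
    have : (1 : ℝ) + k ≠ 0 := by positivity
    rw [Real.norm_of_nonneg (hpos _).le, Real.norm_of_nonneg (hpos _).le]
    have h := gaussCoeff_succ a b hc k
    have : x ≠ 0 := hx0.ne'
    rw [pow_succ]
    field_simp
    linear_combination h
  simp only [hratio]
  simpa using ((tendsto_add_mul_div_add_mul_atTop_nhds a c 1 one_ne_zero).mul
    (tendsto_add_mul_div_add_mul_atTop_nhds b 1 1 one_ne_zero)).mul_const x

/-- **Euler's transformation** `₂F₁(b, c; d; x) = (1 - x) ^ (d - b - c) ₂F₁(d - b, d - c; d; x)`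
at the level of coefficients. -/
lemma sum_antidiagonal_gaussCoeff_mul_poch {d : ℝ} (b c : ℝ) (hd : 0 < d) (k : ℕ) :
    ∑ p ∈ antidiagonal k,
      gaussCoeff (d - b) (d - c) d p.1 * (poch (b + c - d) p.2 / p.2.factorial) =
      gaussCoeff b c d k := by
  induction k with
  | zero => simp [gaussCoeff, poch_zero]
  | succ k ih =>
    set α := gaussCoeff (d - b) (d - c) d
    set β : ℕ → ℝ := fun m => poch (b + c - d) m / m.factorial
    have hβ (m : ℕ) : (m + 1) * β (m + 1) = (b + c - d + m) * β m := by
      simp only [β, poch_succ, Nat.factorial_succ]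
      push_cast
      field_simp
    have hdk : d + k ≠ 0 := by positivity
    have hk : (k : ℝ) + 1 ≠ 0 := by positivity
    refine mul_left_cancel₀ (mul_ne_zero hk hdk) ?_
    rw [gaussCoeff_succ b c hd, ← ih]
    calc (k + 1) * (d + k) * ∑ p ∈ antidiagonal (k + 1), α p.1 * β p.2
        = ∑ p ∈ antidiagonal (k + 1), p.1 * (d + p.1 - 1) * α p.1 * β p.2 +
          ∑ p ∈ antidiagonal (k + 1), p.2 * (d + 2 * p.1 + p.2 - 1) * α p.1 * β p.2 := by
          rw [Finset.mul_sum, ← Finset.sum_add_distrib]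
          refine Finset.sum_congr rfl fun p hp => ?_
          have h : (p.1 : ℝ) + p.2 = k + 1 := by exact_mod_cast mem_antidiagonal.mp hp
          rw [eq_sub_of_add_eq h.symm]
          ring
      _ = ∑ p ∈ antidiagonal k, (d - b + p.1) * (d - c + p.1) * α p.1 * β p.2 +
          ∑ p ∈ antidiagonal k,
            (b + c - d + p.2) * (d + 2 * p.1 + p.2) * α p.1 * β p.2 := by
          rw [Finset.Nat.sum_antidiagonal_succ, Finset.Nat.sum_antidiagonal_succ']
          simp only [Nat.cast_zero, zero_mul, zero_add]
          congr 1 <;> refine Finset.sum_congr rfl fun p _ => ?_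
          · have h := gaussCoeff_succ (d - b) (d - c) hd p.1
            push_cast
            linear_combination β p.2 * h
          · push_cast
            linear_combination (d + 2 * p.1 + p.2) * α p.1 * hβ p.2
      _ = (b + k) * (c + k) * ∑ p ∈ antidiagonal k, α p.1 * β p.2 := by
          rw [Finset.mul_sum, ← Finset.sum_add_distrib]
          refine Finset.sum_congr rfl fun p hp => ?_
          have h : (p.1 : ℝ) + p.2 = k := by exact_mod_cast mem_antidiagonal.mp hp
          rw [← h]
          ring

lemma hasSum_poch_div_factorial (u : ℝ) {x : ℝ} (hx0 : 0 < x) (hx1 : x < 1) :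
    HasSum (fun k => poch u k / k.factorial * x ^ k) ((1 - x) ^ (-u)) ∧
      Summable fun k => ‖poch u k / k.factorial * x ^ k‖ := by
  have hf := Real.one_div_one_sub_rpow_hasFPowerSeriesOnBall_zero u
  have hx : x ∈ Metric.eball (0 : ℝ) 1 := by
    simpa [enorm_eq_nnnorm, ← NNReal.coe_lt_coe, abs_of_pos hx0] using hx1
  have hterm (k : ℕ) : FormalMultilinearSeries.ofScalars ℝ
      (fun n : ℕ => Ring.choose (u + n - 1) n) k (fun _ => x) =
      poch u k / k.factorial * x ^ k := by
    simp [choose_eq_poch_div_factorial, mul_comm]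
  constructor
  · have h := hf.hasSum hx
    simp only [hterm, zero_add] at h
    rwa [Real.rpow_neg (by linarith), ← one_div]
  · have h := FormalMultilinearSeries.summable_norm_apply _ (Metric.eball_subset_eball hf.r_le hx)
    simpa only [hterm] using h

/-- **Euler's transformation** `₂F₁(b, c; d; x) = (1 - x) ^ (d - b - c) ₂F₁(d - b, d - c; d; x)`. -/
lemma hasSum_gaussCoeff {b c d x : ℝ} (hd : 0 < d) (hbd : b < d) (hcd : c < d)
    (hx0 : 0 < x) (hx1 : x < 1) :
    HasSum (fun k => gaussCoeff b c d k * x ^ k)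
      ((1 - x) ^ (d - b - c) * ∑' k, gaussCoeff (d - b) (d - c) d k * x ^ k) := by
  have hα := (summable_gaussCoeff_mul_pow (sub_pos.mpr hbd) (sub_pos.mpr hcd) hd hx0 hx1).norm
  obtain ⟨hβ, hβ_norm⟩ := hasSum_poch_div_factorial (b + c - d) hx0 hx1
  have hterm (k : ℕ) : ∑ p ∈ antidiagonal k, gaussCoeff (d - b) (d - c) d p.1 * x ^ p.1 *
      (poch (b + c - d) p.2 / p.2.factorial * x ^ p.2) = gaussCoeff b c d k * x ^ k := by
    rw [← sum_antidiagonal_gaussCoeff_mul_poch b c hd, Finset.sum_mul]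
    refine Finset.sum_congr rfl fun p hp => ?_
    rw [← mem_antidiagonal.mp hp, pow_add]
    ring
  have hsum := (summable_norm_sum_mul_antidiagonal_of_summable_norm hα hβ_norm).of_norm.hasSum
  rw [← tsum_mul_tsum_eq_tsum_sum_antidiagonal_of_summable_norm hα hβ_norm, hβ.tsum_eq] at hsum
  simp only [hterm] at hsum
  rwa [mul_comm, show -(b + c - d) = d - b - c by ring] at hsum

lemma betaFn_pos {p q : ℝ} (hp : 0 < p) (hq : 0 < q) : 0 < betaFn p q :=
  ProbabilityTheory.beta_pos hp hq

lemma betaFn_add_natCast {p q : ℝ} (hp : 0 < p) (hq : 0 < q) (k : ℕ) :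
    betaFn (p + k) q = betaFn p q * (poch p k / poch (p + q) k) := by
  have hpq : 0 < p + q := by positivity
  have := (poch_pos hpq k).ne'
  have := (Real.Gamma_pos_of_pos hpq).ne'
  rw [betaFn, betaFn, add_right_comm, Gamma_add_natCast hp, Gamma_add_natCast hpq]
  field_simp

lemma lintegral_rpow_mul_one_sub_rpow {p q : ℝ} (hp : 0 < p) (hq : 0 < q) :
    ∫⁻ x in Set.Ioo (0 : ℝ) 1, ENNReal.ofReal (x ^ (p - 1) * (1 - x) ^ (q - 1)) =
      ENNReal.ofReal (betaFn p q) := by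
  have hB := betaFn_pos hp hq
  have h := ProbabilityTheory.lintegral_betaPDF_eq_one hp hq
  rw [ProbabilityTheory.lintegral_betaPDF] at h
  rw [← mul_one (ENNReal.ofReal (betaFn p q)), ← h, ← lintegral_const_mul _ (by fun_prop)]
  refine lintegral_congr fun x => ?_
  rw [← ENNReal.ofReal_mul hB.le]
  congr 1
  change _ = betaFn p q * (1 / betaFn p q * _ * _)
  field_simp

/-- Integrating a power series with nonnegative coefficients termwise against the beta density. -/
lemma tsum_mul_betaFn {p q : ℝ} (hp : 0 < p) (hq : 0 < q) {c : ℕ → ℝ} (hc : ∀ k, 0 ≤ c k)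
    {g : ℝ → ℝ} (hg : ∀ x ∈ Set.Ioo (0 : ℝ) 1, HasSum (fun k => c k * x ^ k) (g x)) :
    ∑' k, c k * betaFn (p + k) q =
      (∫⁻ x in Set.Ioo (0 : ℝ) 1,
        ENNReal.ofReal (x ^ (p - 1) * (1 - x) ^ (q - 1) * g x)).toReal := by
  have hpk (k : ℕ) : 0 < p + k := by positivity
  have hterm (k : ℕ) : ENNReal.ofReal (c k * betaFn (p + k) q) =
      ∫⁻ x in Set.Ioo (0 : ℝ) 1,
        ENNReal.ofReal (c k) * ENNReal.ofReal (x ^ (p + k - 1) * (1 - x) ^ (q - 1)) := by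
    rw [lintegral_const_mul _ (by fun_prop), lintegral_rpow_mul_one_sub_rpow (hpk k) hq,
      ENNReal.ofReal_mul (hc k)]
  have hswap : ∫⁻ x in Set.Ioo (0 : ℝ) 1,
      ENNReal.ofReal (x ^ (p - 1) * (1 - x) ^ (q - 1) * g x) =
      ∑' k, ENNReal.ofReal (c k * betaFn (p + k) q) := by
    simp only [hterm]
    rw [← lintegral_tsum fun k => by fun_prop]
    refine setLIntegral_congr_fun measurableSet_Ioo fun x hx => ?_
    have hx0 : 0 < x := hx.1
    have hx1 : 0 < 1 - x := sub_pos.mpr hx.2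
    have hsum := (hg x hx).mul_left (x ^ (p - 1) * (1 - x) ^ (q - 1))
    have hnonneg (k : ℕ) : 0 ≤ x ^ (p - 1) * (1 - x) ^ (q - 1) * (c k * x ^ k) := by
      have := hc k
      positivity
    rw [← hsum.tsum_eq, ENNReal.ofReal_tsum_of_nonneg hnonneg hsum.summable]
    refine tsum_congr fun k => ?_
    rw [← ENNReal.ofReal_mul (hc k), add_sub_right_comm, Real.rpow_add_natCast hx0.ne']
    ring_nf
  rw [hswap, ENNReal.tsum_toReal_eq fun _ => ENNReal.ofReal_ne_top]
  exact tsum_congr fun k =>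
    (ENNReal.toReal_ofReal (mul_nonneg (hc k) (betaFn_pos (hpk k) hq).le)).symm

lemma betaFn_mul_threeF2 {a q : ℝ} (ha : 0 < a) (hq : 0 < q) (b c d : ℝ) :
    betaFn a q * threeF2 a b c d (a + q) = ∑' k, gaussCoeff b c d k * betaFn (a + k) q := by
  rw [threeF2, ← tsum_mul_left]
  refine tsum_congr fun k => ?_
  rw [betaFn_add_natCast ha hq, gaussCoeff]
  ring

/-- **Kummer's transformation** of `₃F₂` at `1`. -/
theorem betaFn_mul_threeF2_eq {a b c d e : ℝ} (ha : 0 < a) (hb : 0 < b) (hc : 0 < c)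
    (hbd : b < d) (hcd : c < d) (hae : a < e) (h : 0 < d + e - a - b - c) :
    betaFn a (e - a) * threeF2 a b c d e =
      betaFn a (d + e - a - b - c) * threeF2 a (d - b) (d - c) d (d + e - b - c) := by
  have hd : 0 < d := hb.trans hbd
  have hb' : 0 < d - b := sub_pos.mpr hbd
  have hc' : 0 < d - c := sub_pos.mpr hcd
  have hq : 0 < e - a := sub_pos.mpr hae
  have hL := betaFn_mul_threeF2 ha hq b c d
  have hR := betaFn_mul_threeF2 ha h (d - b) (d - c) d
  rw [add_sub_cancel] at hL
  rw [show a + (d + e - a - b - c) = d + e - b - c by ring] at hR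
  rw [hL, hR,
    tsum_mul_betaFn ha hq (fun k => (gaussCoeff_pos hb hc hd k).le)
      fun x hx => hasSum_gaussCoeff hd hbd hcd hx.1 hx.2,
    tsum_mul_betaFn ha h (fun k => (gaussCoeff_pos hb' hc' hd k).le)
      fun x hx => (summable_gaussCoeff_mul_pow hb' hc' hd hx.1 hx.2).hasSum]
  congr 1
  refine setLIntegral_congr_fun measurableSet_Ioo fun x hx => ?_
  have hx1 : 0 < 1 - x := sub_pos.mpr hx.2
  rw [show d + e - a - b - c - 1 = e - a - 1 + (d - b - c) by ring, Real.rpow_add hx1]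
  ring_nf

/-- Kummer's transformation in the normalization F:
F(r,s) = 2^{4−8r}·Γ(r)Γ(s−r)²/(Γ(1−r)Γ(s−1/2)²)·F(1−r, 1/2−r+s). -/
theorem kummer_transformation (r s : ℚ) (hr0 : 0 < r) (hr1 : r < 1)
    (hs : 1/2 < s) (hrs : r < s) :
    Fval r s = (2:ℝ) ^ ((4:ℝ) - 8 * (r:ℝ)) *
      (Real.Gamma (r:ℝ) * Real.Gamma ((s:ℝ) - (r:ℝ)) ^ 2 /
        (Real.Gamma (1 - (r:ℝ)) * Real.Gamma ((s:ℝ) - 1/2) ^ 2)) *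
      Fval (1 - r) (1/2 - r + s) := by
  have hr0' : (0 : ℝ) < r := by exact_mod_cast hr0
  have hr1' : (r : ℝ) < 1 := by exact_mod_cast hr1
  have hs' : (1 / 2 : ℝ) < s := by
    have : (((1 / 2 : ℚ)) : ℝ) < s := by exact_mod_cast hs
    simpa using this
  have hrs' : (r : ℝ) < s := by exact_mod_cast hrs
  have hK := betaFn_mul_threeF2_eq (a := 1 / 2) (b := 1 / 2) (c := r) (d := 1) (e := s)
    (by norm_num) (by norm_num) hr0' (by norm_num) hr1' hs' (by linarith)
  have hden : (1 - r).den = r.den := by simp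
  have hpow : (2 : ℝ) ^ (1 - 4 * (r : ℝ)) =
      2 ^ (4 - 8 * (r : ℝ)) * 2 ^ (1 - 4 * (1 - (r : ℝ))) := by
    rw [← Real.rpow_add two_pos]
    ring_nf
  have hΓ {x : ℝ} (hx : 0 < x) : Real.Gamma x ≠ 0 := (Real.Gamma_pos_of_pos hx).ne'
  have h1 := hΓ (show (0 : ℝ) < 1 / 2 by norm_num)
  have h2 := hΓ (show 0 < (s : ℝ) - 1 / 2 by linarith)
  have h3 := hΓ (show 0 < (s : ℝ) by linarith)
  have h4 := hΓ (show 0 < 1 - (r : ℝ) by linarith)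
  have h5 := hΓ (show 0 < 1 / 2 - (r : ℝ) + s by linarith)
  have hN : (r.den : ℝ) ≠ 0 := by exact_mod_cast r.den_nz
  rw [show (1 : ℝ) + s - 1 / 2 - 1 / 2 - r = s - r by ring,
    show (1 : ℝ) + s - 1 / 2 - r = 1 / 2 - r + s by ring,
    show (1 : ℝ) - 1 / 2 = 1 / 2 by norm_num] at hK
  simp only [betaFn] at hK
  rw [add_sub_cancel, show (1 / 2 : ℝ) + (s - r) = 1 / 2 - r + s by ring] at hK
  simp only [Fval, hden, betaFn]
  push_cast
  rw [hpow, add_sub_cancel, show 1 / 2 - (r : ℝ) + s - (1 - r) = s - 1 / 2 by ring,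
    show 1 - (r : ℝ) + (s - 1 / 2) = 1 / 2 - r + s by ring]
  generalize Real.Gamma (1 / 2) = G₁ at *
  generalize Real.Gamma ((s : ℝ) - 1 / 2) = G₂ at *
  generalize Real.Gamma (s : ℝ) = G₃ at *
  generalize Real.Gamma (1 - (r : ℝ)) = G₄ at *
  generalize Real.Gamma (1 / 2 - (r : ℝ) + s) = G₅ at *
  field_simp at hK ⊢
  linear_combination Real.Gamma ((s : ℝ) - r) * hK
end

section
/- In the complex numbers, F(1/8,5/8) − 8i·F(7/8,11/8) = (1 − i√2)·(2·F(3/8,7/8) + 4i·F(5/8,9/8)). -/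
namespace ThreeTerm

open MeasureTheory Set Filter Topology
open scoped Real

/-- The Taylor coefficients `(1/2)_n / n!` of `(1 - x) ^ (-1/2)`. -/
noncomputable def halfCoeff (n : ℕ) : ℝ := poch (1 / 2) n / n.factorial

lemma poch_succ (x : ℝ) (n : ℕ) : poch x (n + 1) = poch x n * (x + n) :=
  Finset.prod_range_succ _ _

lemma poch_pos {x : ℝ} (hx : 0 < x) (n : ℕ) : 0 < poch x n :=
  Finset.prod_pos fun _ _ => by positivity

lemma halfCoeff_nonneg (n : ℕ) : 0 ≤ halfCoeff n :=
  div_nonneg (poch_pos (by norm_num) n).le (by positivity)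

lemma halfCoeff_le_one (n : ℕ) : halfCoeff n ≤ 1 := by
  rw [halfCoeff, div_le_one (by positivity)]
  induction n with
  | zero => simp [poch]
  | succ n ih =>
    rw [poch_succ, Nat.factorial_succ, mul_comm]
    push_cast
    have := (poch_pos (x := 1 / 2) (by norm_num) n).le
    exact mul_le_mul (by linarith) ih this (by positivity)

lemma ringChoose_eq_halfCoeff (n : ℕ) :
    Ring.choose ((1 / 2 : ℂ) + n - 1) n = (halfCoeff n : ℂ) := by
  rw [Ring.choose_eq_smul, Polynomial.descPochhammer_smeval_eq_ascPochhammer,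
    Polynomial.ascPochhammer_smeval_cast, Polynomial.ascPochhammer_smeval_eq_eval,
    show (1 / 2 : ℂ) + n - 1 - n + 1 = 1 / 2 by ring, halfCoeff, poch]
  have : (ascPochhammer ℂ n).eval (1 / 2 : ℂ) = ∏ i ∈ Finset.range n, ((1 / 2 : ℂ) + i) := by
    induction n with
    | zero => simp
    | succ n ih => rw [ascPochhammer_succ_right, Finset.prod_range_succ, ← ih]; simp
  rw [this]
  push_cast
  simp [div_eq_inv_mul]

/-- The principal branch of `(1 - z) ^ (-1/2)`. -/
noncomputable def invSqrt (z : ℂ) : ℂ := (1 - z) ^ (-(1 / 2) : ℂ)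

lemma hasSum_invSqrt {x : ℂ} (hx : ‖x‖ < 1) :
    HasSum (fun n => (halfCoeff n : ℂ) * x ^ n) (invSqrt x) := by
  have h := (Complex.one_div_one_sub_cpow_hasFPowerSeriesOnBall_zero (1 / 2)).hasSum
    (y := x) (by simpa [enorm_eq_nnnorm, ← NNReal.coe_lt_one] using hx)
  rw [invSqrt, Complex.cpow_neg, ← one_div]
  convert! h using 1
  · ext n
    simp [FormalMultilinearSeries.ofScalars, ← ringChoose_eq_halfCoeff, mul_comm]
  · simp

lemma summable_norm_halfCoeff {x : ℂ} (hx : ‖x‖ < 1) :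
    Summable fun n => ‖(halfCoeff n : ℂ) * x ^ n‖ := by
  refine (summable_geometric_of_lt_one (norm_nonneg x) hx).of_nonneg_of_le
    (fun _ => norm_nonneg _) fun n => ?_
  rw [norm_mul, norm_pow, Complex.norm_real, Real.norm_of_nonneg (halfCoeff_nonneg n)]
  exact mul_le_of_le_one_left (by positivity) (halfCoeff_le_one n)

/-- The Gauss series `₂F₁(1/2, 1/2; 1; z)`. -/
noncomputable def gaussK (z : ℂ) : ℂ := ∑' n : ℕ, ((halfCoeff n ^ 2 : ℝ) : ℂ) * z ^ n

lemma summable_norm_gaussK {z : ℂ} (hz : ‖z‖ < 1) :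
    Summable fun n : ℕ => ‖((halfCoeff n ^ 2 : ℝ) : ℂ) * z ^ n‖ := by
  refine (summable_geometric_of_lt_one (norm_nonneg z) hz).of_nonneg_of_le
    (fun _ => norm_nonneg _) fun n => ?_
  rw [norm_mul, norm_pow, Complex.norm_real, Real.norm_of_nonneg (sq_nonneg _)]
  exact mul_le_of_le_one_left (by positivity)
    (pow_le_one₀ (halfCoeff_nonneg n) (halfCoeff_le_one n))

lemma hasSum_gaussK {z : ℂ} (hz : ‖z‖ < 1) :
    HasSum (fun n : ℕ => ((halfCoeff n ^ 2 : ℝ) : ℂ) * z ^ n) (gaussK z) :=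
  (summable_norm_gaussK hz).of_norm.hasSum

lemma integral_exp_two_mul_sub (m n : ℕ) :
    ∫ φ in (-(π / 2))..(π / 2), Complex.exp (2 * φ * Complex.I) ^ m *
      Complex.exp (-(2 * φ * Complex.I)) ^ n = if m = n then (π : ℂ) else 0 := by
  have h : ∀ φ : ℝ, Complex.exp (2 * φ * Complex.I) ^ m *
      Complex.exp (-(2 * φ * Complex.I)) ^ n =
      Complex.exp ((2 * ((m : ℂ) - n) * Complex.I) * φ) := fun φ => by
    rw [← Complex.exp_nat_mul, ← Complex.exp_nat_mul, ← Complex.exp_add]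
    ring_nf
  simp_rw [h]
  split_ifs with hmn
  · subst hmn
    simp
  · have hc : (2 * ((m : ℂ) - n) * Complex.I) ≠ 0 := by
      have : (m : ℂ) - n ≠ 0 := sub_ne_zero.2 (by exact_mod_cast hmn)
      simp [this]
    rw [integral_exp_mul_complex hc, div_eq_zero_iff, sub_eq_zero]
    refine Or.inl (Complex.exp_eq_exp_iff_exists_int.2 ⟨(m : ℤ) - n, ?_⟩)
    push_cast
    ring

lemma norm_mul_exp_lt {w : ℂ} (hw : ‖w‖ < 1) (θ : ℝ) : ‖w * Complex.exp (θ * Complex.I)‖ < 1 := by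
  rwa [norm_mul, Complex.norm_exp_ofReal_mul_I, mul_one]

lemma hasSum_mul_prod {f g : ℕ → ℂ} {a b : ℂ} (hf : HasSum f a) (hg : HasSum g b)
    (hf' : Summable fun n => ‖f n‖) (hg' : Summable fun n => ‖g n‖) :
    HasSum (fun p : ℕ × ℕ => f p.1 * g p.2) (a * b) :=
  hf.mul hg (summable_mul_of_summable_norm hf' hg')

lemma hasSum_invSqrt_mul {x y : ℂ} (hx : ‖x‖ < 1) (hy : ‖y‖ < 1) :
    HasSum (fun p : ℕ × ℕ => ((halfCoeff p.1 : ℂ) * x ^ p.1) * ((halfCoeff p.2 : ℂ) * y ^ p.2))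
      (invSqrt x * invSqrt y) := by
  have h := hasSum_mul_prod (hasSum_invSqrt hx) (hasSum_invSqrt hy) (summable_norm_halfCoeff hx)
    (summable_norm_halfCoeff hy)
  exact h

lemma gaussK_sq_eq_integral {w : ℂ} (hw : ‖w‖ < 1) :
    (π : ℂ) * gaussK (w ^ 2) = ∫ φ in (-(π / 2))..(π / 2),
      invSqrt (w * Complex.exp (2 * φ * Complex.I)) *
        invSqrt (w * Complex.exp (-(2 * φ * Complex.I))) := by
  have n1 : ∀ φ : ℝ, ‖Complex.exp (2 * φ * Complex.I)‖ = 1 := fun φ => by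
    simpa using Complex.norm_exp_ofReal_mul_I (2 * φ)
  have n2 : ∀ φ : ℝ, ‖Complex.exp (-(2 * φ * Complex.I))‖ = 1 := fun φ => by
    simpa using Complex.norm_exp_ofReal_mul_I (-(2 * φ))
  set F : ℕ × ℕ → ℝ → ℂ := fun p φ =>
    ((halfCoeff p.1 : ℂ) * (w * Complex.exp (2 * φ * Complex.I)) ^ p.1) *
      ((halfCoeff p.2 : ℂ) * (w * Complex.exp (-(2 * φ * Complex.I))) ^ p.2) with hF
  have hs := summable_norm_halfCoeff hw
  have key : HasSum (fun p => ∫ φ in (-(π / 2))..(π / 2), F p φ)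
      (∫ φ in (-(π / 2))..(π / 2), invSqrt (w * Complex.exp (2 * φ * Complex.I)) *
        invSqrt (w * Complex.exp (-(2 * φ * Complex.I)))) := by
    refine intervalIntegral.hasSum_integral_of_dominated_convergence
      (fun p _ => ‖(halfCoeff p.1 : ℂ) * w ^ p.1‖ * ‖(halfCoeff p.2 : ℂ) * w ^ p.2‖)
      (fun p => ?_) (fun p => ?_) ?_ ?_ ?_
    · exact Continuous.aestronglyMeasurable (by fun_prop)
    · refine Eventually.of_forall fun φ _ => ?_
      simp [hF, mul_pow, n1, n2]
    · exact Eventually.of_forall fun φ _ => hs.mul_of_nonneg hs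
        (fun _ => norm_nonneg _) (fun _ => norm_nonneg _)
    · simp
    · refine Eventually.of_forall fun φ _ => ?_
      have h1 : ‖w * Complex.exp (2 * φ * Complex.I)‖ < 1 := by rwa [norm_mul, n1, mul_one]
      have h2 : ‖w * Complex.exp (-(2 * φ * Complex.I))‖ < 1 := by rwa [norm_mul, n2, mul_one]
      exact hasSum_invSqrt_mul h1 h2
  have hval : ∀ p : ℕ × ℕ, ∫ φ in (-(π / 2))..(π / 2), F p φ =
      if p.1 = p.2 then (π : ℂ) * (halfCoeff p.1 * w ^ p.1 * (halfCoeff p.2 * w ^ p.2)) else 0 := by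
    intro p
    have : ∀ φ : ℝ, F p φ = (halfCoeff p.1 * w ^ p.1 * (halfCoeff p.2 * w ^ p.2)) *
        (Complex.exp (2 * φ * Complex.I) ^ p.1 * Complex.exp (-(2 * φ * Complex.I)) ^ p.2) := by
      intro φ
      simp only [hF, mul_pow]
      ring
    simp_rw [this]
    rw [intervalIntegral.integral_const_mul, integral_exp_two_mul_sub]
    split_ifs <;> ring
  simp_rw [hval] at key
  have hinj : Function.Injective fun n : ℕ => (n, n) := fun a b h => (Prod.mk.inj h).1
  rw [← hinj.hasSum_iff] at key
  · have hw2 : ‖w ^ 2‖ < 1 := by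
      rw [norm_pow]
      exact pow_lt_one₀ (norm_nonneg _) hw two_ne_zero
    refine ((hasSum_gaussK hw2).mul_left (π : ℂ)).unique ?_
    have hterm : ∀ n : ℕ, (π : ℂ) * (((halfCoeff n ^ 2 : ℝ) : ℂ) * (w ^ 2) ^ n) =
        (π : ℂ) * (halfCoeff n * w ^ n * (halfCoeff n * w ^ n)) := fun n => by
      push_cast
      ring
    simp_rw [hterm]
    simpa [Function.comp_def] using key
  · rintro ⟨m, n⟩ hmn
    refine if_neg fun h => hmn ⟨m, ?_⟩
    exact Prod.ext rfl h

lemma gaussK_sq_eq_integral_half {w : ℂ} (hw : ‖w‖ < 1) :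
    gaussK (w ^ 2) = (2 / π : ℂ) * ∫ φ in Ioo 0 (π / 2),
      invSqrt (w * Complex.exp (2 * φ * Complex.I)) *
        invSqrt (w * Complex.exp (-(2 * φ * Complex.I))) := by
  have hpi : (π : ℂ) ≠ 0 := by exact_mod_cast Real.pi_ne_zero
  have h := gaussK_sq_eq_integral hw
  set f : ℝ → ℂ := fun φ => invSqrt (w * Complex.exp (2 * φ * Complex.I)) *
        invSqrt (w * Complex.exp (-(2 * φ * Complex.I))) with hf
  have heven : ∀ φ, f (-φ) = f φ := fun φ => by
    simp only [hf]
    push_cast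
    rw [mul_comm]
    congr 4 <;> ring_nf
  have hcont : Continuous f := by
    have hc : ∀ g : ℝ → ℂ, Continuous g → (∀ x, ‖g x‖ < 1) →
        Continuous fun x => invSqrt (g x) := fun g hg hg1 => by
      unfold invSqrt
      refine (continuous_const.sub hg).cpow continuous_const fun x => ?_
      rw [sub_eq_add_neg]
      exact Complex.mem_slitPlane_of_norm_lt_one (by simpa using hg1 x)
    refine (hc _ (by fun_prop) fun φ => ?_).mul (hc _ (by fun_prop) fun φ => ?_)
    · simpa using norm_mul_exp_lt hw (2 * φ)
    · simpa using norm_mul_exp_lt hw (-(2 * φ))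
  have hsplit : ∫ φ in (-(π / 2))..(π / 2), f φ = 2 * ∫ φ in (0 : ℝ)..(π / 2), f φ := by
    rw [← intervalIntegral.integral_add_adjacent_intervals
      (hcont.intervalIntegrable _ 0) (hcont.intervalIntegrable 0 _)]
    have : ∫ φ in (-(π / 2))..0, f φ = ∫ φ in (0 : ℝ)..(π / 2), f φ := by
      have := intervalIntegral.integral_comp_neg (a := 0) (b := π / 2) f
      simp only [heven, neg_zero] at this
      exact this.symm
    rw [this]
    ring
  rw [hsplit, intervalIntegral.integral_of_le Real.pi_div_two_pos.le,
    integral_Ioc_eq_integral_Ioo] at h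
  field_simp
  rw [mul_comm, h]

lemma invSqrt_polar {z : ℂ} {r θ : ℝ} (hr : 0 < r) (h1 : -π < θ) (h2 : θ ≤ π)
    (hz : 1 - z = r * Complex.exp (θ * Complex.I)) :
    invSqrt z = ((√r)⁻¹ : ℝ) * Complex.exp (-(θ / 2) * Complex.I) := by
  have h : 1 - z = Complex.exp ((Real.log r : ℝ) + θ * Complex.I) := by
    rw [hz, Complex.exp_add, ← Complex.ofReal_exp, Real.exp_log hr]
  rw [invSqrt, h, Complex.cpow_def_of_ne_zero (Complex.exp_ne_zero _),
    Complex.log_exp (by simpa using h1) (by simpa using h2), add_mul, Complex.exp_add]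
  congr 1
  · rw [show ((Real.log r : ℝ) : ℂ) * -(1 / 2) = ((Real.log r * (-(1 / 2)) : ℝ) : ℂ) by
        push_cast; rfl,
      ← Complex.ofReal_exp, ← Real.rpow_def_of_pos hr, Real.rpow_neg hr.le, ← Real.sqrt_eq_rpow]
  · congr 1
    ring

lemma norm_invSqrt {z : ℂ} (hz : z ≠ 1) : ‖invSqrt z‖ = (√‖1 - z‖)⁻¹ := by
  have h0 : 1 - z ≠ 0 := sub_ne_zero.2 hz.symm
  rw [invSqrt_polar (norm_pos_iff.2 h0) (Complex.neg_pi_lt_arg _) (Complex.arg_le_pi _)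
    (Complex.norm_mul_exp_arg_mul_I (1 - z)).symm, norm_mul, Complex.norm_real,
    Real.norm_of_nonneg (by positivity),
    show -((Complex.arg (1 - z) : ℂ) / 2) * Complex.I =
      ((-(Complex.arg (1 - z) / 2) : ℝ) : ℂ) * Complex.I by push_cast; rfl,
    Complex.norm_exp_ofReal_mul_I, mul_one]

lemma one_sub_mem_slitPlane {z : ℂ} (hz : ‖z‖ < 1) : 1 - z ∈ Complex.slitPlane := by
  rw [sub_eq_add_neg]
  exact Complex.mem_slitPlane_of_norm_lt_one (by simpa using hz)

lemma invSqrt_mul_conj {z : ℂ} (hz : ‖z‖ < 1) :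
    invSqrt z * invSqrt ((starRingEnd ℂ) z) = ((‖1 - z‖)⁻¹ : ℝ) := by
  have h1 : z ≠ 1 := fun h => by simp [h] at hz
  have hc : invSqrt ((starRingEnd ℂ) z) = (starRingEnd ℂ) (invSqrt z) := by
    have := Complex.conj_cpow (1 - z) (-(1 / 2)) (Complex.slitPlane_arg_ne_pi
      (one_sub_mem_slitPlane hz))
    simpa [invSqrt, show (starRingEnd ℂ) 2 = 2 from map_ofNat _ 2] using this
  rw [hc, Complex.mul_conj, Complex.normSq_eq_norm_sq, norm_invSqrt h1, inv_pow,
    Real.sq_sqrt (norm_nonneg _)]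

/-- `π / 2` times `₂F₁(1/2, 1/2; 1; m)`, as a complete elliptic integral. -/
noncomputable def ellK (m : ℝ) : ℝ := ∫ φ in Ioo 0 (π / 2), (√(1 - m * Real.sin φ ^ 2))⁻¹

lemma setIntegral_Ioo_reflect {E : Type*} [NormedAddCommGroup E] [NormedSpace ℝ E]
    (f : ℝ → E) (a b c : ℝ) :
    ∫ x in Ioo (c - b) (c - a), f (c - x) = ∫ x in Ioo a b, f x := by
  have h := (MeasureTheory.volume.measurePreserving_sub_left c).setIntegral_preimage_emb
    (MeasurableEquiv.subLeft c).measurableEmbedding f (Ioo a b)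
  rwa [Set.preimage_const_sub_Ioo] at h

lemma gaussK_pow_four {t : ℝ} (ht : |t| < 1) :
    gaussK ((t : ℂ) ^ 4) =
      ((2 / π * (1 + t ^ 2)⁻¹ * ellK ((2 * t / (1 + t ^ 2)) ^ 2) : ℝ) : ℂ) := by
  have ht2 : t ^ 2 < 1 := (sq_lt_one_iff_abs_lt_one t).2 ht
  have hw : ‖((t ^ 2 : ℝ) : ℂ)‖ < 1 := by
    rwa [Complex.norm_real, Real.norm_of_nonneg (sq_nonneg t)]
  have h := gaussK_sq_eq_integral_half hw
  rw [show (((t ^ 2 : ℝ) : ℂ)) ^ 2 = (t : ℂ) ^ 4 by push_cast; ring] at h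
  have h_int : ∀ φ : ℝ, invSqrt (((t ^ 2 : ℝ) : ℂ) * Complex.exp (2 * φ * Complex.I)) *
        invSqrt (((t ^ 2 : ℝ) : ℂ) * Complex.exp (-(2 * φ * Complex.I))) =
      (((1 + t ^ 2)⁻¹ *
        (√(1 - (2 * t / (1 + t ^ 2)) ^ 2 * Real.sin (π / 2 - φ) ^ 2))⁻¹ : ℝ) : ℂ) := by
    intro φ
    have hconj : ((t ^ 2 : ℝ) : ℂ) * Complex.exp (-(2 * φ * Complex.I)) =
        (starRingEnd ℂ) (((t ^ 2 : ℝ) : ℂ) * Complex.exp (2 * φ * Complex.I)) := by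
      rw [map_mul, Complex.conj_ofReal, ← Complex.exp_conj]
      simp [show (starRingEnd ℂ) 2 = 2 from map_ofNat _ 2]
    have hlt : ‖((t ^ 2 : ℝ) : ℂ) * Complex.exp (2 * φ * Complex.I)‖ < 1 := by
      simpa using norm_mul_exp_lt hw (2 * φ)
    rw [hconj, invSqrt_mul_conj hlt, ← mul_inv]
    congr 2
    rw [Complex.norm_eq_sqrt_sq_add_sq, ← Real.sqrt_sq (show 0 ≤ 1 + t ^ 2 by positivity),
      ← Real.sqrt_mul (by positivity), Real.sqrt_sq (show 0 ≤ 1 + t ^ 2 by positivity)]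
    congr 1
    rw [show (2 : ℂ) * φ * Complex.I = ((2 * φ : ℝ) : ℂ) * Complex.I by push_cast; ring]
    simp only [Complex.sub_re, Complex.one_re, Complex.re_ofReal_mul, Complex.exp_ofReal_mul_I_re,
      Complex.sub_im, Complex.one_im, Complex.im_ofReal_mul, Complex.exp_ofReal_mul_I_im,
      Real.sin_pi_div_two_sub]
    have e := Real.sin_sq_add_cos_sq (2 * φ)
    have e2 := Real.cos_two_mul φ
    field_simp
    linear_combination t ^ 4 * e - 2 * t ^ 2 * e2
  simp_rw [h_int] at h
  rw [h, integral_complex_ofReal, integral_const_mul]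
  have hr := setIntegral_Ioo_reflect
    (fun x => (√(1 - (2 * t / (1 + t ^ 2)) ^ 2 * Real.sin x ^ 2))⁻¹) 0 (π / 2) (π / 2)
  rw [sub_self, sub_zero] at hr
  rw [hr, ellK]
  push_cast
  ring

lemma sin_pos_of_mem {α : ℝ} (hα : α ∈ Ioo 0 (π / 2)) : 0 < Real.sin α :=
  Real.sin_pos_of_pos_of_lt_pi hα.1 (by linarith [hα.2, Real.pi_pos])

lemma cos_pos_of_mem {α : ℝ} (hα : α ∈ Ioo 0 (π / 2)) : 0 < Real.cos α :=
  Real.cos_pos_of_mem_Ioo ⟨by linarith [hα.1, Real.pi_pos], hα.2⟩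

lemma arcsin_sin_mul_sin_image {α : ℝ} (hα : α ∈ Ioo 0 (π / 2)) :
    (fun ψ => Real.arcsin (Real.sin α * Real.sin ψ)) '' Ioo 0 (π / 2) = Ioo 0 α := by
  have hs := sin_pos_of_mem hα
  ext φ
  constructor
  · rintro ⟨ψ, hψ, rfl⟩
    have hψs := sin_pos_of_mem hψ
    have hψ1 : Real.sin ψ < 1 := by
      have := Real.sin_lt_sin_of_lt_of_le_pi_div_two (by linarith [hψ.1, Real.pi_pos]) le_rfl hψ.2
      simpa using this
    refine ⟨Real.arcsin_pos.2 (by positivity), ?_⟩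
    rw [Real.arcsin_lt_iff_lt_sin' ⟨by linarith [hα.1, Real.pi_pos], hα.2.le⟩]
    nlinarith
  · rintro ⟨h0, h1⟩
    have hφs := sin_pos_of_mem (α := φ) ⟨h0, h1.trans hα.2⟩
    have hlt : Real.sin φ < Real.sin α :=
      Real.sin_lt_sin_of_lt_of_le_pi_div_two (by linarith [Real.pi_pos]) hα.2.le h1
    have hq : Real.sin φ / Real.sin α < 1 := (div_lt_one hs).2 hlt
    refine ⟨Real.arcsin (Real.sin φ / Real.sin α),
      ⟨Real.arcsin_pos.2 (by positivity), Real.arcsin_lt_pi_div_two.2 hq⟩, ?_⟩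
    have hq0 : 0 < Real.sin φ / Real.sin α := by positivity
    simp only
    rw [Real.sin_arcsin (by linarith) hq.le, mul_div_cancel₀ _ hs.ne']
    exact Real.arcsin_sin (by linarith [Real.pi_pos]) (by linarith [hα.2])

lemma arcsin_sin_mul_sin_hasDerivAt {α ψ : ℝ} (hα : α ∈ Ioo 0 (π / 2)) (hψ : ψ ∈ Ioo 0 (π / 2)) :
    HasDerivAt (fun ψ => Real.arcsin (Real.sin α * Real.sin ψ))
      ((√(1 - (Real.sin α * Real.sin ψ) ^ 2))⁻¹ * (Real.sin α * Real.cos ψ)) ψ := by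
  have hs := sin_pos_of_mem hα
  have hψs := sin_pos_of_mem hψ
  have hlt : Real.sin α * Real.sin ψ < 1 := by
    have h1 := cos_pos_of_mem hα
    have := Real.sin_sq_add_cos_sq α
    have := Real.sin_le_one ψ
    nlinarith
  have := (Real.hasDerivAt_arcsin (x := Real.sin α * Real.sin ψ)
    (by nlinarith [mul_pos hs hψs]) hlt.ne).comp ψ ((Real.hasDerivAt_sin ψ).const_mul (Real.sin α))
  simpa [Function.comp_def] using this

lemma arcsin_sin_mul_sin_injOn {α : ℝ} (hα : α ∈ Ioo 0 (π / 2)) :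
    InjOn (fun ψ => Real.arcsin (Real.sin α * Real.sin ψ)) (Ioo 0 (π / 2)) := by
  intro x hx y hy hxy
  have hs := sin_pos_of_mem hα
  have hm : ∀ z ∈ Ioo 0 (π / 2), Real.sin α * Real.sin z ∈ Icc (-1 : ℝ) 1 := fun z hz => by
    have := sin_pos_of_mem hz
    have h2 := mul_pos hs this
    refine ⟨by linarith, ?_⟩
    have := Real.sin_le_one z
    have := Real.sin_le_one α
    nlinarith
  have h := Real.injOn_arcsin (hm x hx) (hm y hy) hxy
  exact Real.strictMonoOn_sin.injOn ⟨by linarith [hx.1, Real.pi_pos], hx.2.le⟩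
    ⟨by linarith [hy.1, Real.pi_pos], hy.2.le⟩ (mul_left_cancel₀ hs.ne' h)

lemma arcsin_change_of_variables {α ψ : ℝ} (hα : α ∈ Ioo 0 (π / 2)) (hψ : ψ ∈ Ioo 0 (π / 2)) :
    |(√(1 - (Real.sin α * Real.sin ψ) ^ 2))⁻¹ * (Real.sin α * Real.cos ψ)| •
      (√(Real.sin α ^ 2 - Real.sin (Real.arcsin (Real.sin α * Real.sin ψ)) ^ 2))⁻¹ =
    (√(1 - Real.sin α ^ 2 * Real.sin ψ ^ 2))⁻¹ := by
  have hs := sin_pos_of_mem hα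
  have hψs := sin_pos_of_mem hψ
  have hψc := cos_pos_of_mem hψ
  have h1 := Real.sin_le_one α
  have h2 := Real.sin_le_one ψ
  have h3 := mul_pos hs hψs
  rw [Real.sin_arcsin (by linarith) (by nlinarith),
    show Real.sin α ^ 2 - (Real.sin α * Real.sin ψ) ^ 2 = (Real.sin α * Real.cos ψ) ^ 2 by
      rw [mul_pow, mul_pow, Real.cos_sq']; ring,
    Real.sqrt_sq (by positivity), abs_of_nonneg (by positivity), smul_eq_mul, mul_assoc,
    mul_inv_cancel₀ (by positivity), mul_one, mul_pow]

lemma ellK_integrableOn {m : ℝ} (hm0 : 0 ≤ m) (hm : m < 1) :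
    IntegrableOn (fun φ => (√(1 - m * Real.sin φ ^ 2))⁻¹) (Ioo 0 (π / 2)) := by
  have hpos : ∀ φ, 0 < 1 - m * Real.sin φ ^ 2 := fun φ => by
    nlinarith [Real.sin_sq_le_one φ]
  have : Continuous fun φ => (√(1 - m * Real.sin φ ^ 2))⁻¹ :=
    Continuous.inv₀ (by fun_prop) fun φ => (Real.sqrt_pos.2 (hpos φ)).ne'
  exact (this.integrableOn_Icc (a := 0) (b := π / 2)).mono_set Ioo_subset_Icc_self

lemma sin_sq_lt_one {α : ℝ} (hα : α ∈ Ioo 0 (π / 2)) : Real.sin α ^ 2 < 1 := by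
  have := cos_pos_of_mem hα
  nlinarith [Real.sin_sq_add_cos_sq α]

lemma integrableOn_inv_sqrt_sin_sq_sub {α : ℝ} (hα : α ∈ Ioo 0 (π / 2)) :
    IntegrableOn (fun φ => (√(Real.sin α ^ 2 - Real.sin φ ^ 2))⁻¹) (Ioo 0 α) := by
  rw [← arcsin_sin_mul_sin_image hα, integrableOn_image_iff_integrableOn_abs_deriv_smul
    measurableSet_Ioo (fun ψ hψ => (arcsin_sin_mul_sin_hasDerivAt hα hψ).hasDerivWithinAt)
    (arcsin_sin_mul_sin_injOn hα)]
  exact (ellK_integrableOn (sq_nonneg _) (sin_sq_lt_one hα)).congr_fun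
    (fun ψ hψ => (arcsin_change_of_variables hα hψ).symm) measurableSet_Ioo

lemma integral_inv_sqrt_sin_sq_sub {α : ℝ} (hα : α ∈ Ioo 0 (π / 2)) :
    ∫ φ in Ioo 0 α, (√(Real.sin α ^ 2 - Real.sin φ ^ 2))⁻¹ = ellK (Real.sin α ^ 2) := by
  rw [← arcsin_sin_mul_sin_image hα, integral_image_eq_integral_abs_deriv_smul
    measurableSet_Ioo (fun ψ hψ => (arcsin_sin_mul_sin_hasDerivAt hα hψ).hasDerivWithinAt)
    (arcsin_sin_mul_sin_injOn hα)]
  exact setIntegral_congr_fun measurableSet_Ioo fun ψ hψ => arcsin_change_of_variables hα hψ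

lemma pi_div_two_sub_mem {α : ℝ} (hα : α ∈ Ioo 0 (π / 2)) : π / 2 - α ∈ Ioo 0 (π / 2) :=
  ⟨by linarith [hα.2], by linarith [hα.1]⟩

lemma cos_sq_sub_reflect (α φ : ℝ) :
    Real.sin (π / 2 - α) ^ 2 - Real.sin (π / 2 - φ) ^ 2 = Real.sin φ ^ 2 - Real.sin α ^ 2 := by
  rw [Real.sin_pi_div_two_sub, Real.sin_pi_div_two_sub, Real.cos_sq', Real.cos_sq']
  ring

lemma integrableOn_inv_sqrt_sub_sin_sq {α : ℝ} (hα : α ∈ Ioo 0 (π / 2)) :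
    IntegrableOn (fun φ => (√(Real.sin φ ^ 2 - Real.sin α ^ 2))⁻¹) (Ioo α (π / 2)) := by
  have h := integrableOn_inv_sqrt_sin_sq_sub (pi_div_two_sub_mem hα)
  have h2 := (MeasureTheory.volume.measurePreserving_sub_left (π / 2)).integrableOn_comp_preimage
    (MeasurableEquiv.subLeft (π / 2)).measurableEmbedding |>.2 h
  rw [Set.preimage_const_sub_Ioo, sub_sub_cancel, sub_zero] at h2
  simpa only [Function.comp_def, cos_sq_sub_reflect] using h2

lemma integral_inv_sqrt_sub_sin_sq {α : ℝ} (hα : α ∈ Ioo 0 (π / 2)) :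
    ∫ φ in Ioo α (π / 2), (√(Real.sin φ ^ 2 - Real.sin α ^ 2))⁻¹ = ellK (Real.cos α ^ 2) := by
  have h := setIntegral_Ioo_reflect
    (fun φ => (√(Real.sin (π / 2 - α) ^ 2 - Real.sin φ ^ 2))⁻¹) 0 (π / 2 - α) (π / 2)
  rw [integral_inv_sqrt_sin_sq_sub (pi_div_two_sub_mem hα), sub_sub_cancel, sub_zero,
    Real.sin_pi_div_two_sub] at h
  rw [← h]
  simp only [← Real.sin_pi_div_two_sub α, cos_sq_sub_reflect]

lemma one_sub_exp_two_mul (ψ : ℝ) : 1 - Complex.exp (((2 * ψ : ℝ) : ℂ) * Complex.I) =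
    ((2 * Real.sin ψ : ℝ) : ℂ) * Complex.exp (((ψ - π / 2 : ℝ) : ℂ) * Complex.I) := by
  apply Complex.ext
  · rw [Complex.sub_re, Complex.one_re, Complex.exp_ofReal_mul_I_re, Complex.re_ofReal_mul,
      Complex.exp_ofReal_mul_I_re, Real.cos_sub_pi_div_two, Real.cos_two_mul, Real.cos_sq']
    ring
  · rw [Complex.sub_im, Complex.one_im, Complex.exp_ofReal_mul_I_im, Complex.im_ofReal_mul,
      Complex.exp_ofReal_mul_I_im, Real.sin_sub_pi_div_two, Real.sin_two_mul]
    ring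

lemma invSqrt_exp_of_pos {ψ : ℝ} (h0 : 0 < ψ) (h1 : ψ < π) :
    invSqrt (Complex.exp (((2 * ψ : ℝ) : ℂ) * Complex.I)) = ((√(2 * Real.sin ψ))⁻¹ : ℝ) *
      Complex.exp (((π / 4 - ψ / 2 : ℝ) : ℂ) * Complex.I) := by
  have hs := Real.sin_pos_of_pos_of_lt_pi h0 h1
  rw [invSqrt_polar (r := 2 * Real.sin ψ) (θ := ψ - π / 2) (by positivity) (by linarith)
    (by linarith) (one_sub_exp_two_mul ψ)]
  congr 3
  push_cast
  ring

lemma invSqrt_exp_of_neg {ψ : ℝ} (h0 : ψ < 0) (h1 : -π < ψ) :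
    invSqrt (Complex.exp (((2 * ψ : ℝ) : ℂ) * Complex.I)) = ((√(2 * -Real.sin ψ))⁻¹ : ℝ) *
      Complex.exp (((-(π / 4) - ψ / 2 : ℝ) : ℂ) * Complex.I) := by
  have hs := Real.sin_neg_of_neg_of_neg_pi_lt h0 h1
  have hz : 1 - Complex.exp (((2 * ψ : ℝ) : ℂ) * Complex.I) =
      ((2 * -Real.sin ψ : ℝ) : ℂ) * Complex.exp (((ψ + π / 2 : ℝ) : ℂ) * Complex.I) := by
    rw [one_sub_exp_two_mul, show ((ψ + π / 2 : ℝ) : ℂ) * Complex.I =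
      ((ψ - π / 2 : ℝ) : ℂ) * Complex.I + π * Complex.I by
      push_cast; ring, Complex.exp_add_pi_mul_I]
    push_cast
    ring
  rw [invSqrt_polar (r := 2 * -Real.sin ψ) (θ := ψ + π / 2) (by linarith) (by linarith)
    (by linarith) hz]
  congr 3
  push_cast
  ring

lemma sin_add_mul_sin_sub (α φ : ℝ) :
    Real.sin (α + φ) * Real.sin (α - φ) = Real.sin α ^ 2 - Real.sin φ ^ 2 := by
  rw [Real.sin_add, Real.sin_sub]
  have h1 := Real.sin_sq_add_cos_sq α
  have h2 := Real.sin_sq_add_cos_sq φ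
  linear_combination Real.sin α ^ 2 * h2 - Real.sin φ ^ 2 * h1

lemma inv_sqrt_two_mul_mul {a b : ℝ} (ha : 0 ≤ a) :
    (√(2 * a))⁻¹ * (√(2 * b))⁻¹ = 1 / 2 * (√(a * b))⁻¹ := by
  rw [← mul_inv, ← Real.sqrt_mul (by positivity), show 2 * a * (2 * b) = 2 ^ 2 * (a * b) by ring,
    Real.sqrt_mul (by positivity), Real.sqrt_sq (by norm_num), mul_inv]
  norm_num

/-- The integrand representing `gaussK ((ρ * exp (2 * α * I)) ^ 2)`. -/
noncomputable def circleKernel (ρ α φ : ℝ) : ℂ :=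
  invSqrt (ρ * Complex.exp (((2 * (α + φ) : ℝ) : ℂ) * Complex.I)) *
    invSqrt (ρ * Complex.exp (((2 * (α - φ) : ℝ) : ℂ) * Complex.I))

lemma gaussK_eq_integral_circleKernel {ρ : ℝ} (h0 : 0 ≤ ρ) (h1 : ρ < 1) (α : ℝ) :
    gaussK ((ρ * Complex.exp (((2 * α : ℝ) : ℂ) * Complex.I)) ^ 2) =
      (2 / π : ℂ) * ∫ φ in Ioo 0 (π / 2), circleKernel ρ α φ := by
  have hn : ‖(ρ : ℂ)‖ < 1 := by rwa [Complex.norm_real, Real.norm_of_nonneg h0]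
  rw [gaussK_sq_eq_integral_half (norm_mul_exp_lt hn _)]
  congr 2
  ext φ
  simp only [circleKernel, mul_assoc (ρ : ℂ), ← Complex.exp_add]
  congr 4 <;> (push_cast; ring)

lemma circleKernel_one_of_lt {α φ : ℝ} (hα : α ∈ Ioo 0 (π / 2)) (hφ : φ ∈ Ioo 0 α) :
    circleKernel 1 α φ = Complex.exp (((-α : ℝ) : ℂ) * Complex.I) * (Complex.I / 2) *
      (((√(Real.sin α ^ 2 - Real.sin φ ^ 2))⁻¹ : ℝ) : ℂ) := by
  obtain ⟨a0, a1⟩ := hα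
  obtain ⟨p0, p1⟩ := hφ
  rw [circleKernel, Complex.ofReal_one, one_mul, one_mul,
    invSqrt_exp_of_pos (by linarith) (by linarith), invSqrt_exp_of_pos (by linarith) (by linarith),
    mul_mul_mul_comm, ← Complex.ofReal_mul, ← Complex.exp_add,
    inv_sqrt_two_mul_mul (Real.sin_pos_of_pos_of_lt_pi (by linarith) (by linarith)).le,
    sin_add_mul_sin_sub, show (((π / 4 - (α + φ) / 2 : ℝ) : ℂ) * Complex.I +
      ((π / 4 - (α - φ) / 2 : ℝ) : ℂ) * Complex.I) = ((-α : ℝ) : ℂ) * Complex.I +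
      π / 2 * Complex.I by push_cast; ring, Complex.exp_add, Complex.exp_pi_div_two_mul_I]
  push_cast
  ring

lemma circleKernel_one_of_gt {α φ : ℝ} (hα : α ∈ Ioo 0 (π / 2)) (hφ : φ ∈ Ioo α (π / 2)) :
    circleKernel 1 α φ = Complex.exp (((-α : ℝ) : ℂ) * Complex.I) * (1 / 2) *
      (((√(Real.sin φ ^ 2 - Real.sin α ^ 2))⁻¹ : ℝ) : ℂ) := by
  obtain ⟨a0, a1⟩ := hα
  obtain ⟨p0, p1⟩ := hφ
  rw [circleKernel, Complex.ofReal_one, one_mul, one_mul,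
    invSqrt_exp_of_pos (by linarith) (by linarith), invSqrt_exp_of_neg (by linarith) (by linarith),
    mul_mul_mul_comm, ← Complex.ofReal_mul, ← Complex.exp_add,
    inv_sqrt_two_mul_mul (Real.sin_pos_of_pos_of_lt_pi (by linarith) (by linarith)).le,
    mul_neg, sin_add_mul_sin_sub, neg_sub, show (((π / 4 - (α + φ) / 2 : ℝ) : ℂ) * Complex.I +
      ((-(π / 4) - (α - φ) / 2 : ℝ) : ℂ) * Complex.I) = ((-α : ℝ) : ℂ) * Complex.I by
      push_cast; ring]
  push_cast
  ring

lemma abs_sin_le_norm_one_sub {ρ : ℝ} (h0 : 0 ≤ ρ) (ψ : ℝ) :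
    |Real.sin ψ| ≤ ‖1 - ρ * Complex.exp (((2 * ψ : ℝ) : ℂ) * Complex.I)‖ := by
  have h : ‖1 - ρ * Complex.exp (((2 * ψ : ℝ) : ℂ) * Complex.I)‖ =
      ‖Complex.exp (((-ψ : ℝ) : ℂ) * Complex.I) - ρ * Complex.exp ((ψ : ℂ) * Complex.I)‖ := by
    rw [← one_mul ‖1 - _‖, ← Complex.norm_exp_ofReal_mul_I (-ψ), ← norm_mul, mul_sub, mul_one,
      mul_left_comm, ← Complex.exp_add]
    congr 4
    push_cast
    ring
  rw [h]
  refine le_trans ?_ (Complex.abs_im_le_norm _)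
  rw [Complex.sub_im, Complex.im_ofReal_mul, Complex.exp_ofReal_mul_I_im,
    Complex.exp_ofReal_mul_I_im, Real.sin_neg, show -Real.sin ψ - ρ * Real.sin ψ =
      -((1 + ρ) * Real.sin ψ) by ring, abs_neg, abs_mul, abs_of_nonneg (by linarith : 0 ≤ 1 + ρ)]
  nlinarith [abs_nonneg (Real.sin ψ)]

lemma ne_one_of_sin_ne_zero {ρ ψ : ℝ} (h0 : 0 ≤ ρ) (hψ : Real.sin ψ ≠ 0) :
    ρ * Complex.exp (((2 * ψ : ℝ) : ℂ) * Complex.I) ≠ 1 := fun h => by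
  have := abs_sin_le_norm_one_sub h0 ψ
  rw [h, sub_self, norm_zero] at this
  exact hψ (abs_nonpos_iff.1 this)

lemma norm_invSqrt_le {ρ ψ : ℝ} (h0 : 0 ≤ ρ) (hψ : Real.sin ψ ≠ 0) :
    ‖invSqrt (ρ * Complex.exp (((2 * ψ : ℝ) : ℂ) * Complex.I))‖ ≤ (√|Real.sin ψ|)⁻¹ := by
  rw [norm_invSqrt (ne_one_of_sin_ne_zero h0 hψ)]
  have := abs_pos.2 hψ
  gcongr
  exact abs_sin_le_norm_one_sub h0 ψ

lemma sin_add_ne_zero {α φ : ℝ} (hα : α ∈ Ioo 0 (π / 2)) (hφ : φ ∈ Ioo 0 (π / 2)) :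
    Real.sin (α + φ) ≠ 0 :=
  (Real.sin_pos_of_pos_of_lt_pi (by linarith [hα.1, hφ.1]) (by linarith [hα.2, hφ.2])).ne'

lemma sin_sub_ne_zero {α φ : ℝ} (hα : α ∈ Ioo 0 (π / 2)) (hφ : φ ∈ Ioo 0 (π / 2)) (h : φ ≠ α) :
    Real.sin (α - φ) ≠ 0 := by
  rcases lt_or_gt_of_ne h with h | h
  · exact (Real.sin_pos_of_pos_of_lt_pi (by linarith) (by linarith [hα.2, hφ.1])).ne'
  · exact (Real.sin_neg_of_neg_of_neg_pi_lt (by linarith) (by linarith [hα.1, hφ.2])).ne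

lemma norm_circleKernel_le {ρ α φ : ℝ} (h0 : 0 ≤ ρ) (hα : α ∈ Ioo 0 (π / 2))
    (hφ : φ ∈ Ioo 0 (π / 2)) (h : φ ≠ α) :
    ‖circleKernel ρ α φ‖ ≤ (√|Real.sin α ^ 2 - Real.sin φ ^ 2|)⁻¹ := by
  rw [← sin_add_mul_sin_sub, abs_mul, Real.sqrt_mul (abs_nonneg _), mul_inv, circleKernel, norm_mul]
  have := norm_invSqrt_le h0 (sin_add_ne_zero hα hφ)
  have := norm_invSqrt_le h0 (sin_sub_ne_zero hα hφ h)
  gcongr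

lemma tendsto_invSqrt {ψ : ℝ} (hψ : Real.sin ψ ≠ 0) :
    Tendsto (fun ρ : ℝ => invSqrt (ρ * Complex.exp (((2 * ψ : ℝ) : ℂ) * Complex.I))) (𝓝[<] 1)
      (𝓝 (invSqrt ((1 : ℝ) * Complex.exp (((2 * ψ : ℝ) : ℂ) * Complex.I)))) := by
  have hmem : 1 - ((1 : ℝ) : ℂ) * Complex.exp (((2 * ψ : ℝ) : ℂ) * Complex.I) ∈
      Complex.slitPlane := by
    left
    rw [Complex.sub_re, Complex.one_re, Complex.re_ofReal_mul, Complex.exp_ofReal_mul_I_re, one_mul,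
      Real.cos_two_mul, Real.cos_sq']
    have := sq_pos_of_ne_zero hψ
    linarith
  have : ContinuousAt (fun ρ : ℝ => invSqrt (ρ * Complex.exp (((2 * ψ : ℝ) : ℂ) * Complex.I))) 1 :=
    ContinuousAt.cpow (by fun_prop) continuousAt_const hmem
  exact this.tendsto.mono_left nhdsWithin_le_nhds

lemma tendsto_circleKernel {α φ : ℝ} (hα : α ∈ Ioo 0 (π / 2)) (hφ : φ ∈ Ioo 0 (π / 2))
    (h : φ ≠ α) :
    Tendsto (fun ρ : ℝ => circleKernel ρ α φ) (𝓝[<] 1) (𝓝 (circleKernel 1 α φ)) :=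
  (tendsto_invSqrt (sin_add_ne_zero hα hφ)).mul (tendsto_invSqrt (sin_sub_ne_zero hα hφ h))

lemma continuous_invSqrt_circle {ρ : ℝ} (h0 : 0 ≤ ρ) (h1 : ρ < 1) :
    Continuous fun ψ : ℝ => invSqrt (ρ * Complex.exp ((ψ : ℂ) * Complex.I)) := by
  unfold invSqrt
  refine Continuous.cpow (by fun_prop) continuous_const fun ψ => one_sub_mem_slitPlane ?_
  refine norm_mul_exp_lt ?_ ψ
  rwa [Complex.norm_real, Real.norm_of_nonneg h0]

lemma continuous_circleKernel {ρ : ℝ} (h0 : 0 ≤ ρ) (h1 : ρ < 1) (α : ℝ) :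
    Continuous fun φ => circleKernel ρ α φ :=
  ((continuous_invSqrt_circle h0 h1).comp (f := fun φ => 2 * (α + φ)) (by fun_prop)).mul
    ((continuous_invSqrt_circle h0 h1).comp (f := fun φ => 2 * (α - φ)) (by fun_prop))

section split

variable {E : Type*} [NormedAddCommGroup E] {f : ℝ → E} {a b c : ℝ}

lemma integrableOn_Ioo_split (hab : a < b) (hbc : b < c)
    (h1 : IntegrableOn f (Ioo a b)) (h2 : IntegrableOn f (Ioo b c)) : IntegrableOn f (Ioo a c) := by
  rw [← Ioc_union_Ioo_eq_Ioo hab.le hbc]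
  exact ((integrableOn_Ioc_iff_integrableOn_Ioo).2 h1).union h2

lemma setIntegral_Ioo_split [NormedSpace ℝ E] (hab : a < b) (hbc : b < c)
    (h1 : IntegrableOn f (Ioo a b)) (h2 : IntegrableOn f (Ioo b c)) :
    ∫ x in Ioo a c, f x = (∫ x in Ioo a b, f x) + ∫ x in Ioo b c, f x := by
  rw [← Ioc_union_Ioo_eq_Ioo hab.le hbc, setIntegral_union ?_ measurableSet_Ioo
    ((integrableOn_Ioc_iff_integrableOn_Ioo).2 h1) h2, integral_Ioc_eq_integral_Ioo]
  exact disjoint_left.2 fun x hx hx' => absurd hx.2 (not_le.2 hx'.1)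

end split

lemma sin_sq_lt_sin_sq {a b : ℝ} (h0 : 0 < a) (hab : a < b) (hb : b < π / 2) :
    Real.sin a ^ 2 < Real.sin b ^ 2 := by
  have h1 := sin_pos_of_mem (α := a) ⟨h0, hab.trans hb⟩
  have h2 := Real.sin_lt_sin_of_lt_of_le_pi_div_two (by linarith [Real.pi_pos]) hb.le hab
  gcongr

lemma abs_kernel_of_lt {α φ : ℝ} (hα : α ∈ Ioo 0 (π / 2)) (hφ : φ ∈ Ioo 0 α) :
    (√|Real.sin α ^ 2 - Real.sin φ ^ 2|)⁻¹ = (√(Real.sin α ^ 2 - Real.sin φ ^ 2))⁻¹ := by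
  rw [abs_of_pos (sub_pos.2 (sin_sq_lt_sin_sq hφ.1 hφ.2 hα.2))]

lemma abs_kernel_of_gt {α φ : ℝ} (hα : α ∈ Ioo 0 (π / 2)) (hφ : φ ∈ Ioo α (π / 2)) :
    (√|Real.sin α ^ 2 - Real.sin φ ^ 2|)⁻¹ = (√(Real.sin φ ^ 2 - Real.sin α ^ 2))⁻¹ := by
  rw [abs_of_neg (sub_neg.2 (sin_sq_lt_sin_sq hα.1 hφ.1 hφ.2)), neg_sub]

lemma integrableOn_abs_kernel {α : ℝ} (hα : α ∈ Ioo 0 (π / 2)) :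
    IntegrableOn (fun φ => (√|Real.sin α ^ 2 - Real.sin φ ^ 2|)⁻¹) (Ioo 0 (π / 2)) :=
  integrableOn_Ioo_split hα.1 hα.2
    ((integrableOn_inv_sqrt_sin_sq_sub hα).congr_fun (fun _ hφ => (abs_kernel_of_lt hα hφ).symm)
      measurableSet_Ioo)
    ((integrableOn_inv_sqrt_sub_sin_sq hα).congr_fun (fun _ hφ => (abs_kernel_of_gt hα hφ).symm)
      measurableSet_Ioo)

lemma integral_abs_kernel {α : ℝ} (hα : α ∈ Ioo 0 (π / 2)) :
    ∫ φ in Ioo 0 (π / 2), (√|Real.sin α ^ 2 - Real.sin φ ^ 2|)⁻¹ =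
      ellK (Real.sin α ^ 2) + ellK (Real.cos α ^ 2) := by
  have h := integrableOn_abs_kernel hα
  rw [setIntegral_Ioo_split hα.1 hα.2 (h.mono_set (Ioo_subset_Ioo_right hα.2.le))
    (h.mono_set (Ioo_subset_Ioo_left hα.1.le)), ← integral_inv_sqrt_sin_sq_sub hα,
    ← integral_inv_sqrt_sub_sin_sq hα]
  congr 1
  · exact setIntegral_congr_fun measurableSet_Ioo fun _ hφ => abs_kernel_of_lt hα hφ
  · exact setIntegral_congr_fun measurableSet_Ioo fun _ hφ => abs_kernel_of_gt hα hφ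

lemma ae_norm_circleKernel_le {ρ α : ℝ} (h0 : 0 ≤ ρ) (hα : α ∈ Ioo 0 (π / 2)) :
    ∀ᵐ φ ∂volume.restrict (Ioo 0 (π / 2)),
      ‖circleKernel ρ α φ‖ ≤ (√|Real.sin α ^ 2 - Real.sin φ ^ 2|)⁻¹ := by
  filter_upwards [ae_restrict_mem measurableSet_Ioo,
    ae_restrict_of_ae (Measure.ae_ne volume α)] with φ hφ hne
  exact norm_circleKernel_le h0 hα hφ hne

lemma norm_gaussK_le {ρ α : ℝ} (h0 : 0 ≤ ρ) (h1 : ρ < 1) (hα : α ∈ Ioo 0 (π / 2)) :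
    ‖gaussK ((ρ * Complex.exp (((2 * α : ℝ) : ℂ) * Complex.I)) ^ 2)‖ ≤
      2 / π * (ellK (Real.sin α ^ 2) + ellK (Real.cos α ^ 2)) := by
  rw [gaussK_eq_integral_circleKernel h0 h1, norm_mul, ← integral_abs_kernel hα]
  have : ‖(2 / π : ℂ)‖ = 2 / π := by
    rw [norm_div, Complex.norm_real, Real.norm_of_nonneg Real.pi_pos.le]
    simp
  rw [this]
  gcongr
  exact norm_integral_le_of_norm_le (integrableOn_abs_kernel hα) (ae_norm_circleKernel_le h0 hα)

lemma integral_circleKernel_one {α : ℝ} (hα : α ∈ Ioo 0 (π / 2)) :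
    ∫ φ in Ioo 0 (π / 2), circleKernel 1 α φ = Complex.exp (((-α : ℝ) : ℂ) * Complex.I) * (1 / 2) *
      (ellK (Real.cos α ^ 2) + Complex.I * ellK (Real.sin α ^ 2)) := by
  have i1 : IntegrableOn (fun φ => circleKernel 1 α φ) (Ioo 0 α) :=
    IntegrableOn.congr_fun (((integrableOn_inv_sqrt_sin_sq_sub hα).ofReal (𝕜 := ℂ)).const_mul _)
      (fun φ hφ => (circleKernel_one_of_lt hα hφ).symm) measurableSet_Ioo
  have i2 : IntegrableOn (fun φ => circleKernel 1 α φ) (Ioo α (π / 2)) :=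
    IntegrableOn.congr_fun (((integrableOn_inv_sqrt_sub_sin_sq hα).ofReal (𝕜 := ℂ)).const_mul _)
      (fun φ hφ => (circleKernel_one_of_gt hα hφ).symm) measurableSet_Ioo
  rw [setIntegral_Ioo_split hα.1 hα.2 i1 i2,
    setIntegral_congr_fun measurableSet_Ioo fun φ hφ => circleKernel_one_of_lt hα hφ,
    setIntegral_congr_fun measurableSet_Ioo fun φ hφ => circleKernel_one_of_gt hα hφ,
    integral_const_mul, integral_const_mul, integral_complex_ofReal, integral_complex_ofReal,
    integral_inv_sqrt_sin_sq_sub hα, integral_inv_sqrt_sub_sin_sq hα]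
  ring

lemma tendsto_gaussK_circle {α : ℝ} (hα : α ∈ Ioo 0 (π / 2)) :
    Tendsto (fun ρ : ℝ => gaussK ((ρ * Complex.exp (((2 * α : ℝ) : ℂ) * Complex.I)) ^ 2)) (𝓝[<] 1)
      (𝓝 (Complex.exp (((-α : ℝ) : ℂ) * Complex.I) * (1 / π) *
        (ellK (Real.cos α ^ 2) + Complex.I * ellK (Real.sin α ^ 2)))) := by
  have hev : ∀ᶠ ρ : ℝ in 𝓝[<] 1, 0 ≤ ρ ∧ ρ < 1 := by
    filter_upwards [Ioo_mem_nhdsLT (show (0 : ℝ) < 1 by norm_num)] with ρ hρ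
    exact ⟨hρ.1.le, hρ.2⟩
  have h : Tendsto (fun ρ : ℝ => ∫ φ in Ioo 0 (π / 2), circleKernel ρ α φ) (𝓝[<] 1)
      (𝓝 (∫ φ in Ioo 0 (π / 2), circleKernel 1 α φ)) := by
    refine tendsto_integral_filter_of_dominated_convergence _ ?_ ?_ (integrableOn_abs_kernel hα) ?_
    · filter_upwards [hev] with ρ hρ
      exact (continuous_circleKernel hρ.1 hρ.2 α).aestronglyMeasurable
    · filter_upwards [hev] with ρ hρ
      exact ae_norm_circleKernel_le hρ.1 hα
    · filter_upwards [ae_restrict_mem measurableSet_Ioo,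
        ae_restrict_of_ae (Measure.ae_ne volume α)] with φ hφ hne
      exact tendsto_circleKernel hα hφ hne
  rw [integral_circleKernel_one hα] at h
  have h2 := h.const_mul (2 / π : ℂ)
  have e : ∀ z w : ℂ, (2 / π : ℂ) * (z * (1 / 2) * w) = z * (1 / π) * w := fun z w => by ring
  rw [e] at h2
  refine h2.congr' ?_
  filter_upwards [hev] with ρ hρ
  exact (gaussK_eq_integral_circleKernel hρ.1 hρ.2 α).symm

lemma integrableOn_Ioo_pi_div_two_reflect {E : Type*} [NormedAddCommGroup E] {f : ℝ → E}
    (hf : IntegrableOn f (Ioo 0 (π / 2))) :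
    IntegrableOn (fun x => f (π / 2 - x)) (Ioo 0 (π / 2)) := by
  have h := ((MeasureTheory.volume.measurePreserving_sub_left (π / 2)).integrableOn_comp_preimage
    (MeasurableEquiv.subLeft (π / 2)).measurableEmbedding).2 hf
  rwa [Set.preimage_const_sub_Ioo, sub_self, sub_zero] at h

lemma setIntegral_Ioo_pi_div_two_reflect {E : Type*} [NormedAddCommGroup E] [NormedSpace ℝ E]
    (f : ℝ → E) : ∫ x in Ioo 0 (π / 2), f (π / 2 - x) = ∫ x in Ioo 0 (π / 2), f x := by
  simpa using setIntegral_Ioo_reflect f 0 (π / 2) (π / 2)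

lemma integrableOn_sin_rpow :
    IntegrableOn (fun x => Real.sin x ^ (-(3 / 4) : ℝ)) (Ioo 0 (π / 2)) := by
  have h := ((intervalIntegral.integrableOn_Ioo_rpow_iff (s := -(3 / 4)) Real.pi_div_two_pos).2
    (by norm_num)).const_mul ((2 / π) ^ (-(3 / 4) : ℝ))
  refine h.mono' (Real.measurable_sin.pow_const _).aestronglyMeasurable
    ((ae_restrict_mem measurableSet_Ioo).mono fun x hx => ?_)
  have hp : 0 < 2 / π * x := mul_pos (by positivity) hx.1
  rw [Real.norm_of_nonneg (Real.rpow_nonneg (sin_pos_of_mem hx).le _),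
    ← Real.mul_rpow (by positivity) hx.1.le]
  exact Real.rpow_le_rpow_of_nonpos hp (Real.mul_le_sin hx.1.le hx.2.le) (by norm_num)

lemma integrableOn_cos_rpow :
    IntegrableOn (fun x => Real.cos x ^ (-(3 / 4) : ℝ)) (Ioo 0 (π / 2)) := by
  simpa only [Real.sin_pi_div_two_sub] using
    integrableOn_Ioo_pi_div_two_reflect integrableOn_sin_rpow

lemma cos_sq_le_one_sub (a b : ℝ) : Real.cos a ^ 2 ≤ 1 - Real.sin a ^ 2 * Real.sin b ^ 2 := by
  nlinarith [Real.sin_sq_add_cos_sq a, Real.sin_sq_le_one b, sq_nonneg (Real.sin a)]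

lemma ellK_nonneg (m : ℝ) : 0 ≤ ellK m := integral_nonneg fun _ => by positivity

lemma ellK_sin_sq_le {α : ℝ} (hα : α ∈ Ioo 0 (π / 2)) : ellK (Real.sin α ^ 2) ≤
    Real.cos α ^ (-(1 / 4) : ℝ) * ∫ φ in Ioo 0 (π / 2), Real.cos φ ^ (-(3 / 4) : ℝ) := by
  rw [ellK, ← integral_const_mul]
  refine setIntegral_mono_on (ellK_integrableOn (sq_nonneg _) (sin_sq_lt_one hα))
    (integrableOn_cos_rpow.const_mul _) measurableSet_Ioo fun φ hφ => ?_
  have ha := cos_pos_of_mem hα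
  have hb := cos_pos_of_mem hφ
  rw [Real.rpow_neg ha.le, Real.rpow_neg hb.le, ← mul_inv]
  have h1 : Real.cos α ≤ √(1 - Real.sin α ^ 2 * Real.sin φ ^ 2) :=
    Real.le_sqrt_of_sq_le (cos_sq_le_one_sub _ _)
  have h2 : Real.cos φ ≤ √(1 - Real.sin α ^ 2 * Real.sin φ ^ 2) :=
    Real.le_sqrt_of_sq_le (by rw [mul_comm]; exact cos_sq_le_one_sub _ _)
  gcongr
  calc Real.cos α ^ (1 / 4 : ℝ) * Real.cos φ ^ (3 / 4 : ℝ)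
      ≤ √(1 - Real.sin α ^ 2 * Real.sin φ ^ 2) ^ (1 / 4 : ℝ) *
        √(1 - Real.sin α ^ 2 * Real.sin φ ^ 2) ^ (3 / 4 : ℝ) := by gcongr
    _ = √(1 - Real.sin α ^ 2 * Real.sin φ ^ 2) := by
      rw [← Real.rpow_add (ha.trans_le h1)]
      norm_num

lemma measurable_ellK : Measurable ellK := by
  have : Measurable fun p : ℝ × ℝ => (√(1 - p.1 * Real.sin p.2 ^ 2))⁻¹ := by fun_prop
  exact (this.stronglyMeasurable.integral_prod_right (ν := volume.restrict _)).measurable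

/-- The weight `J(sin² α) / √(sin 2α)` against which everything is integrated. -/
noncomputable def ellWeight (α : ℝ) : ℝ := ellK (Real.sin α ^ 2) * (√(Real.sin (2 * α)))⁻¹

lemma measurable_ellWeight : Measurable ellWeight :=
  (measurable_ellK.comp (by fun_prop)).mul (by fun_prop)

lemma ellWeight_nonneg (α : ℝ) : 0 ≤ ellWeight α := mul_nonneg (ellK_nonneg _) (by positivity)

lemma sin_rpow_mul_cos_rpow_le {α : ℝ} (hα : α ∈ Ioo 0 (π / 2)) :
    Real.sin α ^ (-(1 / 2) : ℝ) * Real.cos α ^ (-(3 / 4) : ℝ) ≤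
      2 * (Real.sin α ^ (-(3 / 4) : ℝ) + Real.cos α ^ (-(3 / 4) : ℝ)) := by
  have hs := sin_pos_of_mem hα
  have hc := cos_pos_of_mem hα
  have key : ∀ {x e : ℝ}, 1 / 2 ≤ x → -1 ≤ e → e ≤ 0 → x ^ e ≤ 2 := fun {x e} hx h0 h1 => calc
    x ^ e ≤ (1 / 2) ^ e := Real.rpow_le_rpow_of_nonpos (by norm_num) hx h1
    _ ≤ (1 / 2) ^ (-1 : ℝ) :=
      Real.rpow_le_rpow_of_exponent_ge (by norm_num) (by norm_num) h0
    _ = 2 := by rw [Real.rpow_neg_one]; norm_num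
  have p1 := Real.rpow_pos_of_pos hs (-(3 / 4))
  have p2 := Real.rpow_pos_of_pos hc (-(3 / 4))
  have p3 := Real.rpow_pos_of_pos hs (-(1 / 2))
  rcases le_total (1 / 2) (Real.cos α) with h | h
  · have h1 := key (e := -(3 / 4)) h (by norm_num) (by norm_num)
    have h2 := Real.rpow_le_rpow_of_exponent_ge hs (Real.sin_le_one α)
      (show (-(3 / 4) : ℝ) ≤ -(1 / 2) by norm_num)
    nlinarith
  · have h1 := key (x := Real.sin α) (e := -(1 / 2))
      (by nlinarith [Real.sin_sq_add_cos_sq α]) (by norm_num) (by norm_num)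
    nlinarith

lemma integrableOn_ellWeight : IntegrableOn ellWeight (Ioo 0 (π / 2)) := by
  refine ((integrableOn_sin_rpow.add integrableOn_cos_rpow).const_mul
    (2 * ∫ φ in Ioo 0 (π / 2), Real.cos φ ^ (-(3 / 4) : ℝ))).mono'
    measurable_ellWeight.aestronglyMeasurable
    ((ae_restrict_mem measurableSet_Ioo).mono fun α hα => ?_)
  have hs := sin_pos_of_mem hα
  have hc := cos_pos_of_mem hα
  set M := ∫ φ in Ioo 0 (π / 2), Real.cos φ ^ (-(3 / 4) : ℝ) with hM
  have hM0 : 0 ≤ M := setIntegral_nonneg measurableSet_Ioo fun φ hφ =>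
    Real.rpow_nonneg (cos_pos_of_mem hφ).le _
  rw [Real.norm_of_nonneg (ellWeight_nonneg α), ellWeight, Real.sin_two_mul]
  have hw : (√(2 * Real.sin α * Real.cos α))⁻¹ ≤
      Real.sin α ^ (-(1 / 2) : ℝ) * Real.cos α ^ (-(1 / 2) : ℝ) := by
    rw [← Real.mul_rpow hs.le hc.le, Real.rpow_neg (by positivity), ← Real.sqrt_eq_rpow]
    gcongr
    nlinarith
  calc ellK (Real.sin α ^ 2) * (√(2 * Real.sin α * Real.cos α))⁻¹
      ≤ (Real.cos α ^ (-(1 / 4) : ℝ) * M) *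
        (Real.sin α ^ (-(1 / 2) : ℝ) * Real.cos α ^ (-(1 / 2) : ℝ)) := by
        gcongr
        exact ellK_sin_sq_le hα
    _ = M * (Real.sin α ^ (-(1 / 2) : ℝ) * Real.cos α ^ (-(3 / 4) : ℝ)) := by
        rw [show (-(3 / 4) : ℝ) = -(1 / 4) + -(1 / 2) by norm_num, Real.rpow_add hc]
        ring
    _ ≤ M * (2 * (Real.sin α ^ (-(3 / 4) : ℝ) + Real.cos α ^ (-(3 / 4) : ℝ))) :=
        mul_le_mul_of_nonneg_left (sin_rpow_mul_cos_rpow_le hα) hM0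
    _ = _ := by simp only [Pi.add_apply]; ring

/-- The restriction to the real axis of `z ↦ z ^ (2 * k) * invSqrt (z ^ 8) * gaussK (z ^ 8)`. -/
noncomputable def hypReal (k : ℕ) (y : ℝ) : ℝ :=
  y ^ (2 * k) * (√(1 - y ^ 8))⁻¹ *
    (2 / π * (1 + y ^ 4)⁻¹ * ellK ((2 * y ^ 2 / (1 + y ^ 4)) ^ 2))

lemma gaussK_pow_eight {y : ℝ} (hy : y ∈ Ioo 0 1) : gaussK ((y : ℂ) ^ 8) =
    ((2 / π * (1 + y ^ 4)⁻¹ * ellK ((2 * y ^ 2 / (1 + y ^ 4)) ^ 2) : ℝ) : ℂ) := by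
  have h := gaussK_pow_four (t := y ^ 2)
    (by rw [abs_of_nonneg (by positivity)]; exact pow_lt_one₀ hy.1.le hy.2 two_ne_zero)
  rw [← pow_mul] at h
  rw [← h]
  push_cast
  ring_nf

lemma half_mem {α : ℝ} (hα : α ∈ Ioo 0 (π / 2)) : α / 2 ∈ Ioo 0 (π / 2) :=
  ⟨by linarith [hα.1], by linarith [hα.1, hα.2]⟩

lemma sqrt_tan_half_image : (fun α => √(Real.tan (α / 2))) '' Ioo 0 (π / 2) = Ioo 0 1 := by
  ext y
  constructor
  · rintro ⟨α, hα, rfl⟩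
    refine ⟨Real.sqrt_pos.2 (Real.tan_pos_of_pos_of_lt_pi_div_two (half_mem hα).1
      (half_mem hα).2), ?_⟩
    rw [Real.sqrt_lt' one_pos, one_pow, ← Real.tan_pi_div_four]
    exact Real.tan_lt_tan_of_lt_of_lt_pi_div_two (by linarith [hα.1, Real.pi_pos])
      (by linarith [Real.pi_pos]) (by linarith [hα.2])
  · rintro ⟨h0, h1⟩
    have h2 : Real.arctan (y ^ 2) < π / 4 := by
      rw [← Real.arctan_one]
      exact Real.arctan_strictMono (pow_lt_one₀ h0.le h1 two_ne_zero)
    refine ⟨2 * Real.arctan (y ^ 2), ⟨?_, by linarith⟩, ?_⟩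
    · have := Real.arctan_pos.2 (pow_pos h0 2)
      positivity
    · simp only [mul_div_cancel_left₀ _ (two_ne_zero' ℝ), Real.tan_arctan, Real.sqrt_sq h0.le]

lemma sqrt_tan_half_injOn : InjOn (fun α => √(Real.tan (α / 2))) (Ioo 0 (π / 2)) := by
  intro a ha b hb h
  have ha' := half_mem ha
  have hb' := half_mem hb
  have h1 := (Real.sqrt_inj (Real.tan_pos_of_pos_of_lt_pi_div_two ha'.1 ha'.2).le
    (Real.tan_pos_of_pos_of_lt_pi_div_two hb'.1 hb'.2).le).1 h
  have := Real.injOn_tan ⟨by linarith [ha'.1, Real.pi_pos], ha'.2⟩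
    ⟨by linarith [hb'.1, Real.pi_pos], hb'.2⟩ h1
  linarith

lemma hasDerivAt_sqrt_tan_half {α : ℝ} (hα : α ∈ Ioo 0 (π / 2)) :
    HasDerivAt (fun α => √(Real.tan (α / 2)))
      (1 / (4 * Real.cos (α / 2) ^ 2 * √(Real.tan (α / 2)))) α := by
  have ht := Real.tan_pos_of_pos_of_lt_pi_div_two (half_mem hα).1 (half_mem hα).2
  have h : HasDerivAt (fun α => Real.tan (α / 2)) (1 / Real.cos (α / 2) ^ 2 * (1 / 2)) α :=
    HasDerivAt.comp (h₂ := Real.tan) (h := fun α => α / 2) α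
      (Real.hasDerivAt_tan (cos_pos_of_mem (half_mem hα)).ne') ((hasDerivAt_id α).div_const 2)
  convert h.sqrt ht.ne' using 1
  have := Real.sqrt_pos.2 ht
  have := cos_pos_of_mem (half_mem hα)
  field_simp
  norm_num

lemma deriv_mul_hypReal {k : ℕ} (hk : k ≤ 3) {α : ℝ} (hα : α ∈ Ioo 0 (π / 2)) :
    |1 / (4 * Real.cos (α / 2) ^ 2 * √(Real.tan (α / 2)))| * hypReal k (√(Real.tan (α / 2))) =
      1 / π * (Real.sin (α / 2) ^ k * Real.cos (α / 2) ^ (3 - k) * ellWeight α) := by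
  have hS := sin_pos_of_mem (half_mem hα)
  have hC := cos_pos_of_mem (half_mem hα)
  have hsin : Real.sin α = 2 * Real.sin (α / 2) * Real.cos (α / 2) := by
    rw [← Real.sin_two_mul]; congr 1; ring
  have hcos : Real.cos α = Real.cos (α / 2) ^ 2 - Real.sin (α / 2) ^ 2 := by
    rw [← Real.cos_two_mul']; congr 1; ring
  have hcα := cos_pos_of_mem hα
  have hsα := sin_pos_of_mem hα
  have h1 := Real.sin_sq_add_cos_sq (α / 2)
  rw [ellWeight, Real.tan_eq_sin_div_cos, Real.sin_two_mul α]
  set S := Real.sin (α / 2)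
  set C := Real.cos (α / 2)
  have ht : 0 < S / C := div_pos hS hC
  set y := √(S / C) with hy
  have hy0 : 0 < y := Real.sqrt_pos.2 ht
  have hy2 : y ^ 2 = S / C := Real.sq_sqrt ht.le
  have hy4 : 1 + y ^ 4 = (C ^ 2)⁻¹ := by
    rw [show y ^ 4 = (y ^ 2) ^ 2 by ring, hy2]
    field_simp
    linarith
  have hm : 2 * y ^ 2 / (1 + y ^ 4) = Real.sin α := by
    rw [hy4, hy2, hsin]
    field_simp
  have hroot : √(1 - y ^ 8) * y = √(2 * Real.sin α * Real.cos α) / (2 * C ^ 3) := by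
    rw [← Real.sqrt_sq hy0.le, ← Real.sqrt_mul' _ (sq_nonneg y),
      ← Real.sqrt_sq (show 0 ≤ 2 * C ^ 3 by positivity), ← Real.sqrt_div (by positivity),
      Real.sqrt_sq hy0.le]
    congr 1
    rw [show y ^ 8 = (y ^ 2) ^ 4 by ring, hy2, hsin, hcos]
    field_simp
    have : C ^ 4 - S ^ 4 = C ^ 2 - S ^ 2 := by
      rw [show C ^ 4 - S ^ 4 = (C ^ 2 - S ^ 2) * (S ^ 2 + C ^ 2) by ring, h1, mul_one]
    linear_combination this
  have hD : 0 < √(2 * Real.sin α * Real.cos α) := Real.sqrt_pos.2 (by positivity)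
  have hroot' : (√(1 - y ^ 8))⁻¹ = y * (2 * C ^ 3) * (√(2 * Real.sin α * Real.cos α))⁻¹ := by
    have h8 : √(1 - y ^ 8) ≠ 0 := fun h => by
      rw [h, zero_mul] at hroot
      have : 0 < √(2 * Real.sin α * Real.cos α) / (2 * C ^ 3) := by positivity
      exact this.ne hroot
    field_simp at hroot ⊢
    linarith
  rw [hypReal, hroot', hm, hy4, pow_mul, hy2, abs_of_pos (by positivity)]
  have hp : C ^ 3 = C ^ (3 - k) * C ^ k := by rw [← pow_add, Nat.sub_add_cancel hk]
  rw [div_pow, hp]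
  field_simp
  norm_num

lemma hypReal_integrableOn {k : ℕ} (hk : k ≤ 3) : IntegrableOn (hypReal k) (Ioo 0 1) := by
  rw [← sqrt_tan_half_image, integrableOn_image_iff_integrableOn_abs_deriv_smul measurableSet_Ioo
    (fun α hα => (hasDerivAt_sqrt_tan_half hα).hasDerivWithinAt) sqrt_tan_half_injOn]
  refine IntegrableOn.congr_fun ?_ (fun α hα => (deriv_mul_hypReal hk hα).symm) measurableSet_Ioo
  refine (integrableOn_ellWeight.mono' (f := fun α =>
    Real.sin (α / 2) ^ k * Real.cos (α / 2) ^ (3 - k) * ellWeight α)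
    ((Measurable.mul (by fun_prop) measurable_ellWeight).aestronglyMeasurable)
    (.of_forall fun α => ?_)).const_mul _
  rw [norm_mul, norm_mul, norm_pow, norm_pow, Real.norm_of_nonneg (ellWeight_nonneg α)]
  exact mul_le_of_le_one_left (ellWeight_nonneg α) (mul_le_one₀
    (pow_le_one₀ (norm_nonneg _) (Real.abs_sin_le_one _)) (by positivity)
    (pow_le_one₀ (norm_nonneg _) (Real.abs_cos_le_one _)))

lemma integral_hypReal {k : ℕ} (hk : k ≤ 3) : ∫ y in Ioo 0 1, hypReal k y =
    1 / π * ∫ α in Ioo 0 (π / 2), Real.sin (α / 2) ^ k * Real.cos (α / 2) ^ (3 - k) *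
      ellWeight α := by
  rw [← sqrt_tan_half_image, integral_image_eq_integral_abs_deriv_smul measurableSet_Ioo
    (fun α hα => (hasDerivAt_sqrt_tan_half hα).hasDerivWithinAt) sqrt_tan_half_injOn,
    ← integral_const_mul]
  exact setIntegral_congr_fun measurableSet_Ioo fun α hα => deriv_mul_hypReal hk hα

lemma betaFn_eq_setIntegral {a : ℝ} (ha : 0 < a) :
    betaFn a (1 / 2) = ∫ x in Ioo 0 1, x ^ (a - 1) * (√(1 - x))⁻¹ := by
  have h : betaFn a (1 / 2) = (Complex.betaIntegral a (1 / 2 : ℝ)).re :=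
    ProbabilityTheory.beta_eq_betaIntegralReal a (1 / 2) ha (by norm_num)
  rw [h, Complex.betaIntegral, intervalIntegral.integral_of_le zero_le_one,
    integral_Ioc_eq_integral_Ioo, setIntegral_congr_fun (g := fun x : ℝ =>
      ((x ^ (a - 1) * (√(1 - x))⁻¹ : ℝ) : ℂ)) measurableSet_Ioo, integral_complex_ofReal,
    Complex.ofReal_re]
  intro x hx
  have hx' : 0 ≤ 1 - x := by linarith [hx.2]
  simp only
  rw [Real.sqrt_eq_rpow, ← Real.rpow_neg hx', Complex.ofReal_mul, Complex.ofReal_cpow hx.1.le,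
    Complex.ofReal_cpow hx']
  push_cast
  norm_num

lemma pow_eight_image : (fun y : ℝ => y ^ 8) '' Ioo 0 1 = Ioo 0 1 := by
  ext x
  constructor
  · rintro ⟨y, hy, rfl⟩
    exact ⟨pow_pos hy.1 8, pow_lt_one₀ hy.1.le hy.2 (by norm_num)⟩
  · rintro ⟨h0, h1⟩
    refine ⟨x ^ (1 / 8 : ℝ), ⟨Real.rpow_pos_of_pos h0 _,
      Real.rpow_lt_one h0.le h1 (by norm_num)⟩, ?_⟩
    simp only
    rw [← Real.rpow_natCast, ← Real.rpow_mul h0.le]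
    norm_num

lemma betaFn_eq_integral_pow_eight (k n : ℕ) : betaFn ((2 * k + 1) / 8 + n) (1 / 2) =
    8 * ∫ y in Ioo 0 1, y ^ (2 * k) * (√(1 - y ^ 8))⁻¹ * y ^ (8 * n) := by
  rw [betaFn_eq_setIntegral (by positivity), ← pow_eight_image,
    integral_image_eq_integral_abs_deriv_smul measurableSet_Ioo
    (fun y _ => (hasDerivAt_pow 8 y).hasDerivWithinAt)
    fun a ha b hb h => (pow_left_inj₀ ha.1.le hb.1.le (by norm_num)).1 h, pow_eight_image,
    ← integral_const_mul]
  refine setIntegral_congr_fun measurableSet_Ioo fun y hy => ?_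
  have hy0 := hy.1
  have h : y ^ 7 * (y ^ 8) ^ ((2 * k + 1) / 8 + n - 1 : ℝ) = y ^ (2 * k) * y ^ (8 * n) := by
    rw [← Real.rpow_natCast y 8, ← Real.rpow_mul hy0.le, ← Real.rpow_natCast y 7,
      ← Real.rpow_add hy0, ← pow_add, ← Real.rpow_natCast y]
    congr 1
    push_cast
    ring
  simp only [smul_eq_mul]
  rw [abs_of_pos (by positivity)]
  norm_num
  linear_combination 8 * (√(1 - y ^ 8))⁻¹ * h

lemma Gamma_add_nat {x : ℝ} (hx : 0 < x) (n : ℕ) :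
    Real.Gamma (x + n) = poch x n * Real.Gamma x := by
  induction n with
  | zero => simp [poch]
  | succ n ih =>
    rw [poch_succ, Nat.cast_add_one, ← add_assoc, Real.Gamma_add_one (by positivity), ih]
    ring

lemma poch_one (n : ℕ) : poch 1 n = n.factorial := by
  induction n with
  | zero => simp [poch]
  | succ n ih => rw [poch_succ, ih, Nat.factorial_succ]; push_cast; ring

lemma betaFn_mul_term {r : ℝ} (hr : 0 < r) (n : ℕ) :
    betaFn r (1 / 2) * (poch (1 / 2) n * poch (1 / 2) n * poch r n /
      (poch 1 n * poch (r + 1 / 2) n * n.factorial)) =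
      halfCoeff n ^ 2 * betaFn (r + n) (1 / 2) := by
  rw [betaFn, betaFn, add_right_comm, Gamma_add_nat hr, Gamma_add_nat (by positivity), poch_one,
    halfCoeff]
  have h1 := (poch_pos (x := r + 1 / 2) (by positivity) n).ne'
  have h2 := (Real.Gamma_pos_of_pos (s := r + 1 / 2) (by positivity)).ne'
  field_simp

lemma hasSum_hypReal (k : ℕ) {y : ℝ} (hy : y ∈ Ioo 0 1) :
    HasSum (fun n => halfCoeff n ^ 2 * (y ^ (2 * k) * (√(1 - y ^ 8))⁻¹ * y ^ (8 * n)))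
      (hypReal k y) := by
  have h8 : ‖(y : ℂ) ^ 8‖ < 1 := by
    rw [norm_pow, Complex.norm_real, Real.norm_of_nonneg hy.1.le]
    exact pow_lt_one₀ hy.1.le hy.2 (by norm_num)
  have h := hasSum_gaussK h8
  rw [gaussK_pow_eight hy] at h
  have h2 : HasSum (fun n => halfCoeff n ^ 2 * (y ^ 8) ^ n) _ :=
    Complex.hasSum_ofReal.1 (by exact_mod_cast h)
  refine (h2.mul_left (y ^ (2 * k) * (√(1 - y ^ 8))⁻¹)).congr_fun fun n => ?_
  ring

lemma hasSum_integral_hypReal {k : ℕ} (hk : k ≤ 3) :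
    HasSum (fun n => ∫ y in Ioo (0 : ℝ) 1, halfCoeff n ^ 2 *
      (y ^ (2 * k) * (√(1 - y ^ 8))⁻¹ * y ^ (8 * n))) (∫ y in Ioo 0 1, hypReal k y) := by
  have hsum : ∀ᵐ y ∂(volume.restrict (Ioo (0 : ℝ) 1)), HasSum (fun n => halfCoeff n ^ 2 *
      (y ^ (2 * k) * (√(1 - y ^ 8))⁻¹ * y ^ (8 * n))) (hypReal k y) :=
    (ae_restrict_mem measurableSet_Ioo).mono fun y hy => hasSum_hypReal k hy
  refine hasSum_integral_of_dominated_convergence _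
    (fun n => Measurable.aestronglyMeasurable (by fun_prop)) (fun n => ?_)
    (hsum.mono fun y hy => hy.summable) ?_ hsum
  · refine (ae_restrict_mem measurableSet_Ioo).mono fun y hy => ?_
    have := hy.1
    exact (Real.norm_of_nonneg (by positivity)).le
  · exact (hypReal_integrableOn hk).congr (hsum.mono fun y hy => hy.tsum_eq.symm)

lemma Fval_eq {r s : ℚ} {k : ℕ} (hk : k ≤ 3) (hr : (r : ℝ) = (2 * k + 1) / 8)
    (hs : (s : ℝ) = r + 1 / 2) (hd : r.den = 8) :
    Fval r s = √2 / 2 ^ (k + 1) * ∫ y in Ioo 0 1, hypReal k y := by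
  have hr0 : (0 : ℝ) < r := by rw [hr]; positivity
  have h : betaFn r (1 / 2) * threeF2 (1 / 2) (1 / 2) r 1 (r + 1 / 2) =
      8 * ∫ y in Ioo 0 1, hypReal k y := by
    rw [← (hasSum_integral_hypReal hk).tsum_eq, threeF2, ← tsum_mul_left, ← tsum_mul_left]
    congr 1
    ext n
    rw [betaFn_mul_term hr0, hr, betaFn_eq_integral_pow_eight, integral_const_mul]
    ring
  have h2 : (2 : ℝ) ^ (1 - 4 * (r : ℝ)) = √2 / 2 ^ k := by
    rw [Real.sqrt_eq_rpow, ← Real.rpow_natCast, ← Real.rpow_sub two_pos, hr]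
    congr 1
    ring
  rw [Fval, h2, hs, add_sub_cancel_left, hd]
  push_cast
  rw [show √2 / 2 ^ k * betaFn r (1 / 2) / (2 * 8) * threeF2 (1 / 2) (1 / 2) r 1 (r + 1 / 2) =
    √2 / 2 ^ k / 16 * (betaFn r (1 / 2) * threeF2 (1 / 2) (1 / 2) r 1 (r + 1 / 2)) by ring, h,
    pow_succ]
  ring

lemma gaussK_differentiableOn : DifferentiableOn ℂ gaussK (Metric.ball 0 1) := by
  intro z hz
  obtain ⟨R, hzR, hR1⟩ := exists_between (mem_ball_zero_iff.1 hz)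
  have hR0 : 0 ≤ R := (norm_nonneg z).trans hzR.le
  have h : DifferentiableOn ℂ gaussK (Metric.ball 0 R) := by
    refine Complex.differentiableOn_tsum_of_summable_norm (summable_geometric_of_lt_one hR0 hR1)
      (fun n => by fun_prop) Metric.isOpen_ball fun n w hw => ?_
    rw [norm_mul, norm_pow, Complex.norm_real, Real.norm_of_nonneg (by positivity)]
    have hw' := (mem_ball_zero_iff.1 hw).le
    calc halfCoeff n ^ 2 * ‖w‖ ^ n ≤ 1 * R ^ n := by
          gcongr
          exact pow_le_one₀ (halfCoeff_nonneg n) (halfCoeff_le_one n)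
      _ = R ^ n := one_mul _
  exact (h.differentiableAt (Metric.isOpen_ball.mem_nhds (mem_ball_zero_iff.2 hzR))
    ).differentiableWithinAt

lemma invSqrt_differentiableOn : DifferentiableOn ℂ invSqrt (Metric.ball 0 1) := fun z hz =>
  (DifferentiableAt.cpow (by fun_prop) (by fun_prop)
    (one_sub_mem_slitPlane (mem_ball_zero_iff.1 hz))).differentiableWithinAt

/-- The holomorphic extension of `hypReal k` to the unit disc. -/
noncomputable def hypComplex (k : ℕ) (z : ℂ) : ℂ := z ^ (2 * k) * invSqrt (z ^ 8) * gaussK (z ^ 8)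

lemma hypComplex_differentiableOn (k : ℕ) :
    DifferentiableOn ℂ (hypComplex k) (Metric.ball 0 1) := by
  have hm : MapsTo (fun z : ℂ => z ^ 8) (Metric.ball 0 1) (Metric.ball 0 1) := fun z hz => by
    rw [mem_ball_zero_iff] at hz ⊢
    rw [norm_pow]
    exact pow_lt_one₀ (norm_nonneg z) hz (by norm_num)
  have hp : DifferentiableOn ℂ (fun z : ℂ => z ^ 8) (Metric.ball 0 1) := by fun_prop
  exact (DifferentiableOn.mul (by fun_prop) (invSqrt_differentiableOn.comp hp hm)).mul
    (gaussK_differentiableOn.comp hp hm)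

lemma hypComplex_ofReal (k : ℕ) {y : ℝ} (hy : y ∈ Ioo 0 1) :
    hypComplex k y = hypReal k y := by
  have h : 0 ≤ 1 - y ^ 8 := by linarith [pow_lt_one₀ hy.1.le hy.2 (n := 8) (by norm_num)]
  have hs : invSqrt ((y : ℂ) ^ 8) = ((√(1 - y ^ 8))⁻¹ : ℝ) := by
    rw [invSqrt, Real.sqrt_eq_rpow, ← Real.rpow_neg h, Complex.ofReal_cpow h]
    push_cast
    rfl
  rw [hypComplex, hypReal, gaussK_pow_eight hy, hs]
  push_cast
  rfl

/-- The primitive eighth root of unity in the first quadrant. -/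
noncomputable def eighthRoot : ℂ := Complex.exp ((π / 4 : ℝ) * Complex.I)

lemma eighthRoot_pow_eight : eighthRoot ^ 8 = 1 := by
  rw [eighthRoot, ← Complex.exp_nat_mul, ← Complex.exp_two_pi_mul_I]
  congr 1
  push_cast
  ring

lemma hypComplex_mul_eighthRoot (k : ℕ) (z : ℂ) :
    hypComplex k (z * eighthRoot) = eighthRoot ^ (2 * k) * hypComplex k z := by
  rw [hypComplex, hypComplex, mul_pow z eighthRoot 8, eighthRoot_pow_eight, mul_one, mul_pow]
  ring

lemma arc_mem_ball {ρ : ℝ} (h0 : 0 ≤ ρ) (h1 : ρ < 1) (θ : ℝ) :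
    (ρ : ℂ) * Complex.exp (θ * Complex.I) ∈ Metric.ball 0 1 := by
  rw [mem_ball_zero_iff]
  refine norm_mul_exp_lt ?_ θ
  rwa [Complex.norm_real, Real.norm_of_nonneg h0]

lemma continuous_hypComplex_arc (k : ℕ) {ρ : ℝ} (h0 : 0 ≤ ρ) (h1 : ρ < 1) :
    Continuous fun α : ℝ => hypComplex k (ρ * Complex.exp ((α / 2 : ℝ) * Complex.I)) :=
  (hypComplex_differentiableOn k).continuousOn.comp_continuous (by fun_prop)
    fun _ => arc_mem_ball h0 h1 _

lemma radial_eq_arc (k : ℕ) {ρ : ℝ} (h0 : 0 ≤ ρ) (h1 : ρ < 1) :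
    (eighthRoot ^ (2 * k + 1) - 1) * ∫ y in (0 : ℝ)..ρ, hypComplex k y =
      ∫ α in Ioo 0 (π / 2), Complex.I / 2 * (ρ * Complex.exp ((α / 2 : ℝ) * Complex.I)) *
        hypComplex k (ρ * Complex.exp ((α / 2 : ℝ) * Complex.I)) := by
  obtain ⟨H, hH⟩ := (hypComplex_differentiableOn k).isExactOn_ball
  have hball : ∀ y ∈ uIcc 0 ρ, (y : ℂ) ∈ Metric.ball 0 1 := fun y hy => by
    rw [uIcc_of_le h0] at hy
    rw [mem_ball_zero_iff, Complex.norm_real, Real.norm_of_nonneg hy.1]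
    exact hy.2.trans_lt h1
  have hc : ContinuousOn (fun y : ℝ => hypComplex k y) (uIcc 0 ρ) :=
    (hypComplex_differentiableOn k).continuousOn.comp (by fun_prop) hball
  have hr1 : ∫ y in (0 : ℝ)..ρ, hypComplex k y = H ρ - H 0 := by
    have := intervalIntegral.integral_eq_sub_of_hasDerivAt
      (fun y hy => (hH y (hball y hy)).comp_ofReal) hc.intervalIntegrable
    simpa using this
  have hr2 : eighthRoot ^ (2 * k + 1) * ∫ y in (0 : ℝ)..ρ, hypComplex k y =
      H (ρ * eighthRoot) - H 0 := by
    have hd : ∀ y ∈ uIcc 0 ρ, HasDerivAt (fun y : ℝ => H (y * eighthRoot))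
        (eighthRoot ^ (2 * k + 1) * hypComplex k y) y := fun y hy => by
      have hy' : (y : ℂ) * eighthRoot ∈ Metric.ball 0 1 := by
        rw [uIcc_of_le h0] at hy
        exact arc_mem_ball hy.1 (hy.2.trans_lt h1) _
      have := (HasDerivAt.comp (h₂ := H) (h := fun z => z * eighthRoot) (y : ℂ) (hH _ hy')
        ((hasDerivAt_id (y : ℂ)).mul_const eighthRoot)).comp_ofReal
      refine this.congr_deriv ?_
      rw [hypComplex_mul_eighthRoot]
      ring
    have := intervalIntegral.integral_eq_sub_of_hasDerivAt hd
      (hc.const_smul (eighthRoot ^ (2 * k + 1))).intervalIntegrable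
    rw [intervalIntegral.integral_const_mul] at this
    simpa using this
  have hr3 : ∫ α in (0 : ℝ)..(π / 2), Complex.I / 2 *
      (ρ * Complex.exp ((α / 2 : ℝ) * Complex.I)) *
        hypComplex k (ρ * Complex.exp ((α / 2 : ℝ) * Complex.I)) = H (ρ * eighthRoot) - H ρ := by
    have hd : ∀ α ∈ uIcc 0 (π / 2), HasDerivAt
        (fun α : ℝ => H (ρ * Complex.exp ((α / 2 : ℝ) * Complex.I)))
        (Complex.I / 2 * (ρ * Complex.exp ((α / 2 : ℝ) * Complex.I)) *
          hypComplex k (ρ * Complex.exp ((α / 2 : ℝ) * Complex.I))) α := fun α _ => by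
      have h2 : HasDerivAt (fun z : ℂ => (ρ : ℂ) * Complex.exp (z / 2 * Complex.I))
          (ρ * (Complex.exp (α / 2 * Complex.I) * (1 / 2 * Complex.I))) α :=
        (((hasDerivAt_id (α : ℂ)).div_const 2).mul_const Complex.I).cexp.const_mul _
      have hm := hH _ (arc_mem_ball h0 h1 (α / 2))
      push_cast at hm ⊢
      refine (HasDerivAt.comp (h₂ := H) (α : ℂ) hm h2).comp_ofReal.congr_deriv ?_
      ring
    have hcont := continuous_hypComplex_arc k h0 h1
    have := intervalIntegral.integral_eq_sub_of_hasDerivAt hd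
      (Continuous.intervalIntegrable (by fun_prop) _ _)
    rw [this, eighthRoot]
    simp [show π / 2 / 2 = π / 4 by ring]
  rw [← integral_Ioc_eq_integral_Ioo, ← intervalIntegral.integral_of_le Real.pi_div_two_pos.le,
    hr3, sub_mul, hr2, one_mul, hr1]
  ring

lemma sin_two_mul_pos_of_mem {α : ℝ} (hα : α ∈ Ioo 0 (π / 2)) : 0 < Real.sin (2 * α) :=
  Real.sin_pos_of_pos_of_lt_pi (by linarith [hα.1]) (by linarith [hα.2])

lemma ellWeight_reflect (α : ℝ) :
    ellWeight (π / 2 - α) = ellK (Real.cos α ^ 2) * (√(Real.sin (2 * α)))⁻¹ := by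
  rw [ellWeight, Real.sin_pi_div_two_sub, show 2 * (π / 2 - α) = π - 2 * α by ring,
    Real.sin_pi_sub]

lemma arc_pow_eight (ρ α : ℝ) : ((ρ : ℂ) * Complex.exp ((α / 2 : ℝ) * Complex.I)) ^ 8 =
    ((ρ ^ 8 : ℝ) : ℂ) * Complex.exp (((2 * (2 * α) : ℝ) : ℂ) * Complex.I) := by
  rw [mul_pow, ← Complex.exp_nat_mul]
  push_cast
  ring_nf

lemma arc_pow_eight_eq_sq (ρ α : ℝ) : ((ρ : ℂ) * Complex.exp ((α / 2 : ℝ) * Complex.I)) ^ 8 =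
    (((ρ ^ 4 : ℝ) : ℂ) * Complex.exp (((2 * α : ℝ) : ℂ) * Complex.I)) ^ 2 := by
  rw [mul_pow, mul_pow, ← Complex.exp_nat_mul, ← Complex.exp_nat_mul]
  push_cast
  ring_nf

lemma norm_hypComplex_arc_le (k : ℕ) {ρ α : ℝ} (h0 : 0 ≤ ρ) (h1 : ρ < 1)
    (hα : α ∈ Ioo 0 (π / 2)) :
    ‖hypComplex k (ρ * Complex.exp ((α / 2 : ℝ) * Complex.I))‖ ≤
      2 / π * (ellWeight α + ellWeight (π / 2 - α)) := by
  have hs := sin_two_mul_pos_of_mem hα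
  have hw := (mem_ball_zero_iff.1 (arc_mem_ball h0 h1 (α / 2))).le
  have hi := norm_invSqrt_le (pow_nonneg h0 8) hs.ne'
  have hg := norm_gaussK_le (pow_nonneg h0 4) (pow_lt_one₀ h0 h1 (by norm_num)) hα
  rw [abs_of_pos hs, ← arc_pow_eight] at hi
  rw [← arc_pow_eight_eq_sq] at hg
  rw [hypComplex, norm_mul, norm_mul, norm_pow, ellWeight_reflect, ellWeight]
  calc _ ≤ 1 * (√(Real.sin (2 * α)))⁻¹ *
        (2 / π * (ellK (Real.sin α ^ 2) + ellK (Real.cos α ^ 2))) := by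
        gcongr
        exact pow_le_one₀ (norm_nonneg _) hw
    _ = _ := by ring

lemma tendsto_pow_nhdsLT_one {n : ℕ} (hn : n ≠ 0) :
    Tendsto (fun ρ : ℝ => ρ ^ n) (𝓝[<] 1) (𝓝[<] 1) := by
  refine tendsto_nhdsWithin_iff.2 ⟨?_, ?_⟩
  · have : Tendsto (fun ρ : ℝ => ρ ^ n) (𝓝 1) (𝓝 (1 ^ n)) := (continuous_pow n).tendsto 1
    rw [one_pow] at this
    exact this.mono_left nhdsWithin_le_nhds
  · filter_upwards [Ioo_mem_nhdsLT (zero_lt_one' ℝ)] with ρ hρ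
    exact pow_lt_one₀ hρ.1.le hρ.2 hn

lemma tendsto_hypComplex_arc (k : ℕ) {α : ℝ} (hα : α ∈ Ioo 0 (π / 2)) :
    Tendsto (fun ρ : ℝ => Complex.I / 2 * (ρ * Complex.exp ((α / 2 : ℝ) * Complex.I)) *
        hypComplex k (ρ * Complex.exp ((α / 2 : ℝ) * Complex.I))) (𝓝[<] 1)
      (𝓝 (Complex.I * eighthRoot / (2 * √2 * π) * (Complex.exp (((k - 3 / 2) * α : ℝ) * Complex.I) *
        (ellWeight (π / 2 - α) + Complex.I * ellWeight α)))) := by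
  have hs := sin_two_mul_pos_of_mem hα
  have hw : Tendsto (fun ρ : ℝ => (ρ : ℂ) * Complex.exp ((α / 2 : ℝ) * Complex.I)) (𝓝[<] 1)
      (𝓝 (Complex.exp ((α / 2 : ℝ) * Complex.I))) := by
    have : Continuous fun ρ : ℝ => (ρ : ℂ) * Complex.exp ((α / 2 : ℝ) * Complex.I) := by fun_prop
    simpa using (this.tendsto 1).mono_left nhdsWithin_le_nhds
  have hi := (tendsto_invSqrt hs.ne').comp (tendsto_pow_nhdsLT_one (n := 8) (by norm_num))
  have hg := (tendsto_gaussK_circle hα).comp (tendsto_pow_nhdsLT_one (n := 4) (by norm_num))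
  simp only [Function.comp_def, ← arc_pow_eight] at hi
  simp only [Function.comp_def, ← arc_pow_eight_eq_sq] at hg
  have h := (hw.const_mul (Complex.I / 2)).mul (((hw.pow (2 * k)).mul hi).mul hg)
  simp only [hypComplex]
  convert h using 2
  rw [Complex.ofReal_one, one_mul,
    invSqrt_exp_of_pos (by linarith [hα.1]) (by linarith [hα.2]), ellWeight_reflect, ellWeight,
    Real.sqrt_mul zero_le_two, mul_inv, eighthRoot, ← Complex.exp_nat_mul]
  have he : Complex.exp ((α / 2 : ℝ) * Complex.I) *
      Complex.exp ((2 * k : ℕ) * ((α / 2 : ℝ) * Complex.I)) *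
      Complex.exp ((π / 4 - 2 * α / 2 : ℝ) * Complex.I) * Complex.exp ((-α : ℝ) * Complex.I) =
      Complex.exp ((π / 4 : ℝ) * Complex.I) *
        Complex.exp (((k - 3 / 2) * α : ℝ) * Complex.I) := by
    simp only [← Complex.exp_add]
    congr 1
    push_cast
    ring
  push_cast at he ⊢
  linear_combination -Complex.I / 2 * (√2 : ℂ)⁻¹ * (√(Real.sin (2 * α)) : ℂ)⁻¹ * (1 / π) *
    (ellK (Real.cos α ^ 2) + Complex.I * ellK (Real.sin α ^ 2)) * he

lemma tendsto_arc_integral (k : ℕ) :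
    Tendsto (fun ρ : ℝ => ∫ α in Ioo 0 (π / 2),
        Complex.I / 2 * (ρ * Complex.exp ((α / 2 : ℝ) * Complex.I)) *
          hypComplex k (ρ * Complex.exp ((α / 2 : ℝ) * Complex.I))) (𝓝[<] 1)
      (𝓝 (∫ α in Ioo 0 (π / 2), Complex.I * eighthRoot / (2 * √2 * π) *
        (Complex.exp (((k - 3 / 2) * α : ℝ) * Complex.I) *
          (ellWeight (π / 2 - α) + Complex.I * ellWeight α)))) := by
  have hev : ∀ᶠ ρ : ℝ in 𝓝[<] 1, ρ ∈ Ioo (0 : ℝ) 1 := Ioo_mem_nhdsLT zero_lt_one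
  refine tendsto_integral_filter_of_dominated_convergence
    (fun α => 2 / π * (ellWeight α + ellWeight (π / 2 - α))) ?_ ?_ ?_ ?_
  · filter_upwards [hev] with ρ hρ
    have := continuous_hypComplex_arc k hρ.1.le hρ.2
    exact Continuous.aestronglyMeasurable (by fun_prop)
  · filter_upwards [hev] with ρ hρ
    filter_upwards [ae_restrict_mem measurableSet_Ioo] with α hα
    have hw := (mem_ball_zero_iff.1 (arc_mem_ball hρ.1.le hρ.2 (α / 2))).le
    have hI : ‖Complex.I / 2‖ ≤ 1 := by norm_num
    rw [norm_mul, norm_mul]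
    calc _ ≤ 1 * 1 * (2 / π * (ellWeight α + ellWeight (π / 2 - α))) := by
          gcongr
          exact norm_hypComplex_arc_le k hρ.1.le hρ.2 hα
      _ = _ := by ring
  · exact (integrableOn_ellWeight.add
      (integrableOn_Ioo_pi_div_two_reflect integrableOn_ellWeight)).const_mul _
  · filter_upwards [ae_restrict_mem measurableSet_Ioo] with α hα
    exact tendsto_hypComplex_arc k hα

lemma tendsto_integral_hypComplex {k : ℕ} (hk : k ≤ 3) :
    Tendsto (fun ρ : ℝ => ∫ y in (0 : ℝ)..ρ, hypComplex k y) (𝓝[<] 1)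
      (𝓝 ((∫ y in Ioo 0 1, hypReal k y : ℝ) : ℂ)) := by
  have hi : IntervalIntegrable (hypReal k) volume 0 1 :=
    (intervalIntegrable_iff_integrableOn_Ioo_of_le zero_le_one).2 (hypReal_integrableOn hk)
  have hc := intervalIntegral.continuousOn_primitive_interval' hi left_mem_uIcc 1 right_mem_uIcc
  rw [uIcc_of_le zero_le_one] at hc
  have h := Complex.continuous_ofReal.continuousAt.tendsto.comp
    (hc.tendsto.mono_left (nhdsWithin_le_of_mem (Icc_mem_nhdsLT zero_lt_one)))
  rw [intervalIntegral.integral_of_le zero_le_one, integral_Ioc_eq_integral_Ioo] at h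
  refine h.congr' ?_
  filter_upwards [Ioo_mem_nhdsLT (zero_lt_one' ℝ)] with ρ hρ
  rw [Function.comp_apply, ← intervalIntegral.integral_ofReal]
  refine intervalIntegral.integral_congr_ae (ae_of_all _ fun y hy => ?_)
  rw [uIoc_of_le hρ.1.le] at hy
  exact (hypComplex_ofReal k ⟨hy.1, hy.2.trans_lt hρ.2⟩).symm

lemma contour_identity {k : ℕ} (hk : k ≤ 3) :
    (eighthRoot ^ (2 * k + 1) - 1) * ((∫ y in Ioo 0 1, hypReal k y : ℝ) : ℂ) =
      ∫ α in Ioo 0 (π / 2), Complex.I * eighthRoot / (2 * √2 * π) *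
        (Complex.exp (((k - 3 / 2) * α : ℝ) * Complex.I) *
          (ellWeight (π / 2 - α) + Complex.I * ellWeight α)) := by
  refine tendsto_nhds_unique (((tendsto_integral_hypComplex hk).const_mul _).congr' ?_)
    (tendsto_arc_integral k)
  filter_upwards [Ioo_mem_nhdsLT (zero_lt_one' ℝ)] with ρ hρ
  exact radial_eq_arc k hρ.1.le hρ.2

lemma integrableOn_trig_mul_ellWeight (j l : ℕ) :
    IntegrableOn (fun α => Real.sin (α / 2) ^ j * Real.cos (α / 2) ^ l * ellWeight α)
      (Ioo 0 (π / 2)) := by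
  refine Integrable.bdd_mul (c := 1) integrableOn_ellWeight
    (Continuous.aestronglyMeasurable (by fun_prop)) (ae_of_all _ fun α => ?_)
  rw [norm_mul, norm_pow, norm_pow]
  exact mul_le_one₀ (pow_le_one₀ (norm_nonneg _) (Real.abs_sin_le_one _)) (by positivity)
    (pow_le_one₀ (norm_nonneg _) (Real.abs_cos_le_one _))

lemma integrableOn_exp_mul_ellWeight (μ : ℝ) :
    IntegrableOn (fun α : ℝ => Complex.exp ((μ * α : ℝ) * Complex.I) * ellWeight α)
      (Ioo 0 (π / 2)) :=
  Integrable.bdd_mul (c := 1) integrableOn_ellWeight.ofReal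
    (Continuous.aestronglyMeasurable (by fun_prop))
    (ae_of_all _ fun α => (Complex.norm_exp_ofReal_mul_I _).le)

lemma integral_exp_mul_ellWeight {μ : ℝ} {c : Fin 4 → ℂ}
    (h : ∀ α : ℝ, Complex.exp ((μ * α : ℝ) * Complex.I) =
      ∑ j : Fin 4, c j * ((Real.sin (α / 2) ^ (j : ℕ) * Real.cos (α / 2) ^ (3 - j : ℕ) : ℝ) : ℂ)) :
    ∫ α in Ioo 0 (π / 2), Complex.exp ((μ * α : ℝ) * Complex.I) * ellWeight α =
      π * ∑ j : Fin 4, c j * ((∫ y in Ioo 0 1, hypReal j y : ℝ) : ℂ) := by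
  have hj (j : Fin 4) : (π : ℂ) * ((∫ y in Ioo 0 1, hypReal j y : ℝ) : ℂ) =
      ∫ α in Ioo 0 (π / 2), ((Real.sin (α / 2) ^ (j : ℕ) * Real.cos (α / 2) ^ (3 - j : ℕ) *
        ellWeight α : ℝ) : ℂ) := by
    rw [integral_hypReal (by omega), integral_complex_ofReal, ← Complex.ofReal_mul, ← mul_assoc,
      mul_one_div_cancel Real.pi_ne_zero, one_mul]
  simp_rw [h, Finset.sum_mul, Finset.mul_sum, mul_left_comm (π : ℂ), hj, ← integral_const_mul]
  rw [integral_finsetSum]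
  · refine Finset.sum_congr rfl fun j _ => integral_congr_ae (ae_of_all _ fun α => ?_)
    push_cast
    ring
  · intro j _
    refine ((integrableOn_trig_mul_ellWeight j (3 - j)).ofReal.const_mul (c j)).congr
      (ae_of_all _ fun α => ?_)
    simp only [Complex.coe_algebraMap, RCLike.ofReal_mul, RCLike.ofReal_pow]
    push_cast
    ring

lemma integral_exp_mul_ellWeight_add (μ : ℝ) :
    ∫ α in Ioo 0 (π / 2), Complex.exp ((μ * α : ℝ) * Complex.I) *
        (ellWeight (π / 2 - α) + Complex.I * ellWeight α) =
      Complex.exp ((μ * (π / 2) : ℝ) * Complex.I) *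
        (∫ α in Ioo 0 (π / 2), Complex.exp (((-μ) * α : ℝ) * Complex.I) * ellWeight α) +
      Complex.I * ∫ α in Ioo 0 (π / 2), Complex.exp ((μ * α : ℝ) * Complex.I) * ellWeight α := by
  have he (α : ℝ) : Complex.exp ((μ * α : ℝ) * Complex.I) *
      (ellWeight (π / 2 - α) + Complex.I * ellWeight α) =
      Complex.exp ((μ * (π / 2) : ℝ) * Complex.I) *
        (Complex.exp (((-μ) * (π / 2 - α) : ℝ) * Complex.I) * ellWeight (π / 2 - α)) +
      Complex.I * (Complex.exp ((μ * α : ℝ) * Complex.I) * ellWeight α) := by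
    rw [← mul_assoc, ← Complex.exp_add, ← add_mul, ← Complex.ofReal_add,
      show μ * (π / 2) + (-μ) * (π / 2 - α) = μ * α by ring]
    ring
  simp_rw [he]
  rw [integral_add ((integrableOn_Ioo_pi_div_two_reflect
      (integrableOn_exp_mul_ellWeight (-μ))).const_mul _)
      ((integrableOn_exp_mul_ellWeight μ).const_mul _), integral_const_mul, integral_const_mul,
    setIntegral_Ioo_pi_div_two_reflect fun α : ℝ =>
      Complex.exp (((-μ) * α : ℝ) * Complex.I) * ellWeight α]

lemma eighthRoot_eq : eighthRoot = √2 / 2 * (1 + Complex.I) := by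
  rw [eighthRoot, Complex.exp_mul_I, ← Complex.ofReal_cos, ← Complex.ofReal_sin,
    Real.cos_pi_div_four, Real.sin_pi_div_four]
  push_cast
  ring

lemma exp_half_mul_I (α : ℝ) : Complex.exp ((α / 2 : ℝ) * Complex.I) =
    Real.cos (α / 2) + Real.sin (α / 2) * Complex.I := by
  rw [Complex.exp_mul_I, Complex.ofReal_cos, Complex.ofReal_sin]

lemma exp_neg_half_mul_I (α : ℝ) : Complex.exp ((-(α / 2) : ℝ) * Complex.I) =
    Real.cos (α / 2) - Real.sin (α / 2) * Complex.I := by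
  rw [Complex.exp_mul_I, ← Complex.ofReal_cos, ← Complex.ofReal_sin, Real.cos_neg, Real.sin_neg]
  push_cast
  ring

lemma contour_coeff_mul (e a b : ℂ) : Complex.I * eighthRoot / (2 * √2 * π) *
    (e * (π * a) + Complex.I * (π * b)) =
      Complex.I * (1 + Complex.I) / 4 * (e * a + Complex.I * b) := by
  have h2 : (√2 : ℂ) ≠ 0 := by simp
  have hpi : (π : ℂ) ≠ 0 := by simp
  rw [eighthRoot_eq]
  field_simp
  ring

lemma eighthRoot_pow_three : eighthRoot ^ 3 = √2 / 2 * (-1 + Complex.I) := by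
  have hs : (√2 : ℂ) ^ 2 = 2 := by exact_mod_cast Real.sq_sqrt zero_le_two
  rw [eighthRoot_eq]
  linear_combination √2 / 8 * (1 + Complex.I) ^ 3 * hs +
    √2 / 4 * (3 + Complex.I) * Complex.I_sq

lemma contour_zero (h : ℕ → ℝ) (hh : ∀ k, h k = ∫ y in Ioo 0 1, hypReal k y) :
    (3 - √2) * h 0 = 3 * h 1 - h 3 + 3 * (√2 - 1) * h 2 := by
  have hp : ∫ α in Ioo 0 (π / 2), Complex.exp (((3 / 2 : ℝ) * α : ℝ) * Complex.I) * ellWeight α =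
      π * ∑ j : Fin 4, ![1, 3 * Complex.I, -3, -Complex.I] j *
        ((∫ y in Ioo 0 1, hypReal j y : ℝ) : ℂ) := by
    refine integral_exp_mul_ellWeight fun α => ?_
    rw [show (((3 / 2 : ℝ) * α : ℝ) : ℂ) * Complex.I = (3 : ℕ) * ((α / 2 : ℝ) * Complex.I) by
      push_cast; ring, Complex.exp_nat_mul, exp_half_mul_I]
    simp only [Fin.sum_univ_four]
    simp
    linear_combination (3 * Complex.cos (α / 2) * Complex.sin (α / 2) ^ 2 +
      Complex.I * Complex.sin (α / 2) ^ 3) * Complex.I_sq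
  have hm : ∫ α in Ioo 0 (π / 2), Complex.exp (((-(3 / 2) : ℝ) * α : ℝ) * Complex.I) *
      ellWeight α = π * ∑ j : Fin 4, ![1, -3 * Complex.I, -3, Complex.I] j *
        ((∫ y in Ioo 0 1, hypReal j y : ℝ) : ℂ) := by
    refine integral_exp_mul_ellWeight fun α => ?_
    rw [show (((-(3 / 2) : ℝ) * α : ℝ) : ℂ) * Complex.I =
      (3 : ℕ) * ((-(α / 2) : ℝ) * Complex.I) by
      push_cast; ring, Complex.exp_nat_mul, exp_neg_half_mul_I]
    simp only [Fin.sum_univ_four]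
    simp
    linear_combination (3 * Complex.cos (α / 2) * Complex.sin (α / 2) ^ 2 -
      Complex.I * Complex.sin (α / 2) ^ 3) * Complex.I_sq
  have hc := contour_identity (k := 0) (by norm_num)
  have he : Complex.exp (((-(3 / 2) : ℝ) * (π / 2) : ℝ) * Complex.I) =
      -(√2 / 2 * (1 + Complex.I)) := by
    rw [show (-(3 / 2) : ℝ) * (π / 2) = π / 4 - π by ring, Complex.ofReal_sub, sub_mul,
      Complex.exp_sub, Complex.exp_pi_mul_I, ← eighthRoot, eighthRoot_eq]
    ring
  rw [integral_const_mul, show (((0 : ℕ) : ℝ) - 3 / 2) = (-(3 / 2) : ℝ) by norm_num,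
    mul_zero, zero_add, pow_one, integral_exp_mul_ellWeight_add, neg_neg, hp, hm, he,
    contour_coeff_mul, eighthRoot_eq] at hc
  simp only [Fin.sum_univ_four] at hc
  have him := congrArg Complex.im hc
  simp [← hh] at him
  have hs : √2 ^ 2 = 2 := Real.sq_sqrt zero_le_two
  linear_combination 4 * (√2 - 1) * him - (2 * h 0 - 3 * h 1 + h 3) * hs

lemma contour_one (h : ℕ → ℝ) (hh : ∀ k, h k = ∫ y in Ioo 0 1, hypReal k y) :
    2 * √2 * h 1 = h 1 + h 3 + (√2 - 1) * (h 0 + h 2) := by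
  have hp : ∫ α in Ioo 0 (π / 2), Complex.exp (((1 / 2 : ℝ) * α : ℝ) * Complex.I) * ellWeight α =
      π * ∑ j : Fin 4, ![1, Complex.I, 1, Complex.I] j *
        ((∫ y in Ioo 0 1, hypReal j y : ℝ) : ℂ) := by
    refine integral_exp_mul_ellWeight fun α => ?_
    rw [one_div_mul_eq_div, exp_half_mul_I]
    have hs := Complex.sin_sq_add_cos_sq (α / 2)
    simp only [Fin.sum_univ_four]
    simp
    linear_combination -(Complex.cos (α / 2) + Complex.I * Complex.sin (α / 2)) * hs
  have hm : ∫ α in Ioo 0 (π / 2), Complex.exp (((-(1 / 2) : ℝ) * α : ℝ) * Complex.I) *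
      ellWeight α = π * ∑ j : Fin 4, ![1, -Complex.I, 1, -Complex.I] j *
        ((∫ y in Ioo 0 1, hypReal j y : ℝ) : ℂ) := by
    refine integral_exp_mul_ellWeight fun α => ?_
    rw [neg_mul, one_div_mul_eq_div, exp_neg_half_mul_I]
    have hs := Complex.sin_sq_add_cos_sq (α / 2)
    simp only [Fin.sum_univ_four]
    simp
    linear_combination -(Complex.cos (α / 2) - Complex.I * Complex.sin (α / 2)) * hs
  have hc := contour_identity (k := 1) (by norm_num)
  have he : Complex.exp (((-(1 / 2) : ℝ) * (π / 2) : ℝ) * Complex.I) =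
      √2 / 2 * (1 - Complex.I) := by
    rw [show (-(1 / 2) : ℝ) * (π / 2) = -(π / 4) by ring, Complex.exp_mul_I,
      ← Complex.ofReal_cos, ← Complex.ofReal_sin, Real.cos_neg, Real.sin_neg,
      Real.cos_pi_div_four, Real.sin_pi_div_four]
    push_cast
    ring
  rw [integral_const_mul, show (((1 : ℕ) : ℝ) - 3 / 2) = (-(1 / 2) : ℝ) by norm_num,
    mul_one, two_add_one_eq_three, integral_exp_mul_ellWeight_add, neg_neg, hp, hm, he,
    contour_coeff_mul, eighthRoot_pow_three] at hc
  simp only [Fin.sum_univ_four] at hc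
  have hre := congrArg Complex.re hc
  simp [← hh] at hre
  have hs : √2 ^ 2 = 2 := Real.sq_sqrt zero_le_two
  linear_combination -4 * (√2 - 1) * hre - (h 1 - h 3) * hs

lemma moment_relations (h : ℕ → ℝ) (hh : ∀ k, h k = ∫ y in Ioo 0 1, hypReal k y) :
    h 0 = h 1 + √2 * h 2 ∧ √2 * h 1 = h 2 + h 3 := by
  have h0 := contour_zero h hh
  have h1 := contour_one h hh
  have hs : √2 ^ 2 = 2 := Real.sq_sqrt zero_le_two
  have h01 : h 0 = h 1 + √2 * h 2 := by
    linear_combination (2 + √2) / 4 * (h0 + h1) + (1 / 2 * h 0 - 1 / 2 * h 1 + h 2) * hs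
  exact ⟨h01, by linear_combination h1 + (√2 - 1) * h01 + h 2 * hs⟩

end ThreeTerm

open Complex in
/-- F(1/8,5/8) − 8i·F(7/8,11/8) = (1 − i√2)·(2·F(3/8,7/8) + 4i·F(5/8,9/8)). -/
theorem three_term_class6 :
    (Fval (1/8) (5/8) : ℂ) - 8 * I * (Fval (7/8) (11/8) : ℂ) =
      (1 - I * (Real.sqrt 2 : ℂ)) *
        (2 * (Fval (3/8) (7/8) : ℂ) + 4 * I * (Fval (5/8) (9/8) : ℂ)) := by
  obtain ⟨h0, h1⟩ := ThreeTerm.moment_relations _ fun _ => rfl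
  rw [ThreeTerm.Fval_eq (k := 0) (r := 1 / 8) (by simp) (by norm_num) (by norm_num)
      (by norm_num),
    ThreeTerm.Fval_eq (k := 1) (r := 3 / 8) (by simp) (by norm_num) (by norm_num)
      (by norm_num),
    ThreeTerm.Fval_eq (k := 2) (r := 5 / 8) (by simp) (by norm_num) (by norm_num)
      (by norm_num),
    ThreeTerm.Fval_eq (k := 3) (r := 7 / 8) le_rfl (by norm_num) (by norm_num)
      (by norm_num)]
  have h0' := congrArg ((↑) : ℝ → ℂ) h0
  have h1' := congrArg ((↑) : ℝ → ℂ) h1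
  push_cast at h0' h1' ⊢
  linear_combination (√2 : ℂ) / 2 * h0' + (√2 : ℂ) / 2 * I * h1' +
    (√2 : ℂ) ^ 2 / 2 * ((∫ y in Set.Ioo 0 1, ThreeTerm.hypReal 2 y : ℝ) : ℂ) * I_sq
end
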